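/- arXiv:1311.6695 — 5 statements merged into one kernel-verified Lean document; each statement's English description precedes it below -/
import Mathlib

section
/- Let ψ ∈ K̄(z) be a rational function of good reduction, and let x ∈ K̄ be a fixed point of ψ with multiplier λ = ψ'(x). Then |λ|_v ≤ 1; that is, x is indifferent or attracting, and a map of good reduction has no repelling fixed point in K̄. -/
open Polynomial

noncomputable section

namespace PaperPGR

variable {K : Type*} [Field K]

/-- The ring of integers `{x : K | v x ≤ 1}` of a non-archimedean absolute value. -/
def vints (v : AbsoluteValue K ℝ) (hna : IsNonarchimedean (⇑v)) : Subring K where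
  carrier := {x : K | v x ≤ 1}
  mul_mem' := by
    intro a b ha hb
    simp only [Set.mem_setOf_eq, map_mul] at *
    nlinarith [v.nonneg a, v.nonneg b]
  one_mem' := by simp [Set.mem_setOf_eq]
  add_mem' := by
    intro a b ha hb
    exact le_trans (hna a b) (max_le ha hb)
  zero_mem' := by simp [Set.mem_setOf_eq]
  neg_mem' := by
    intro a ha
    simpa [Set.mem_setOf_eq] using ha

/-- The maximal ideal `{x : K | v x < 1}` of the ring of integers. -/
def vmax (v : AbsoluteValue K ℝ) (hna : IsNonarchimedean (⇑v)) : Ideal (vints v hna) where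
  carrier := {x | v (x : K) < 1}
  add_mem' := by
    intro a b ha hb
    simp only [Set.mem_setOf_eq] at *
    calc v ((a : K) + (b : K)) ≤ max (v (a : K)) (v (b : K)) := hna _ _
      _ < 1 := max_lt ha hb
  zero_mem' := by simp [Set.mem_setOf_eq]
  smul_mem' := by
    intro c x hx
    simp only [Set.mem_setOf_eq, smul_eq_mul] at *
    have : v ((c : K) * (x : K)) = v (c : K) * v (x : K) := map_mul v _ _
    have hc : v (c : K) ≤ 1 := c.2
    have := v.nonneg (c : K)
    have := v.nonneg (x : K)
    calc v (((c * x : vints v hna) : K)) = v ((c : K) * (x : K)) := by norm_cast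
      _ = v (c : K) * v (x : K) := map_mul v _ _
      _ < 1 := by nlinarith

/-- View a polynomial with integral coefficients as a polynomial over `K`. -/
def liftp (v : AbsoluteValue K ℝ) (hna : IsNonarchimedean (⇑v))
    (f : Polynomial (vints v hna)) : Polynomial K :=
  f.map (vints v hna).subtype

/-- The coefficientwise reduction of `f ∈ O[z]` modulo the maximal ideal. -/
def redp (v : AbsoluteValue K ℝ) (hna : IsNonarchimedean (⇑v))
    (f : Polynomial (vints v hna)) : Polynomial ((vints v hna) ⧸ (vmax v hna)) :=
  f.map (Ideal.Quotient.mk (vmax v hna))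

/-- `(f, g)` is a normalized representation of a rational function:  `f, g ∈ O[z]` are
coprime (over `K`) and at least one coefficient of `f` or `g` has absolute value `1`. -/
def GoodRep (v : AbsoluteValue K ℝ) (hna : IsNonarchimedean (⇑v))
    (f g : Polynomial (vints v hna)) : Prop :=
  IsCoprime (liftp v hna f) (liftp v hna g) ∧
    ∃ n : ℕ, v ((f.coeff n : K)) = 1 ∨ v ((g.coeff n : K)) = 1

/-- The rational function `f/g` has good reduction: the reductions of `f` and `g` are coprime
in `k̄[z]` and the reduced degree equals `max (deg f) (deg g)`. -/
def GoodRed (v : AbsoluteValue K ℝ) (hna : IsNonarchimedean (⇑v))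
    (f g : Polynomial (vints v hna)) : Prop :=
  IsCoprime (redp v hna f) (redp v hna g) ∧
    max (redp v hna f).natDegree (redp v hna g).natDegree = max f.natDegree g.natDegree

open Classical in
/-- The self-map of `P¹(K) = K ∪ {∞}` (encoded as `Option K`, with `none = ∞`) induced by the
rational function `f/g` (for `f, g` coprime). -/
def rmap (f g : Polynomial K) : Option K → Option K
  | none =>
      if g.natDegree < f.natDegree then none
      else some (f.coeff g.natDegree / g.leadingCoeff)
  | some x => if g.eval x = 0 then none else some (f.eval x / g.eval x)

/-- The multiplier of the rational function `f/g` at a point of `P¹(K)`; at a point of `K` it is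
the value of the derivative `(f/g)' = (f'g - fg')/g²`, and at `∞` it is `ψ'(0)` for
`ψ(z) = 1/φ(1/z)`, computed via the reflections of `f` and `g` at `d = max (deg f) (deg g)`. -/
def multiplier (f g : Polynomial K) : Option K → K
  | some x => (derivative f * g - f * derivative g).eval x / g.eval x ^ 2
  | none =>
      (derivative (Polynomial.reflect (max f.natDegree g.natDegree) g) *
            Polynomial.reflect (max f.natDegree g.natDegree) f -
          Polynomial.reflect (max f.natDegree g.natDegree) g *
            derivative (Polynomial.reflect (max f.natDegree g.natDegree) f)).eval 0 /
        ((Polynomial.reflect (max f.natDegree g.natDegree) f).eval 0) ^ 2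

/-- The Möbius transformation `z ↦ (az+b)/(cz+d)` as a self-map of `P¹(K)`. -/
def mob (a b c d : K) : Option K → Option K :=
  rmap (C a * X + C b) (C c * X + C d)

/-- The rational function `f/g` (with `f, g` coprime) has potentially good reduction:
some Möbius conjugate `h ∘ (f/g) ∘ h⁻¹` admits a normalized representation `F/G` with
good reduction.  The conjugation relation is expressed as `ψ ∘ h = h ∘ φ` on `P¹(K)`. -/
def PotGoodRed (v : AbsoluteValue K ℝ) (hna : IsNonarchimedean (⇑v))
    (f g : Polynomial K) : Prop :=
  ∃ a b c d : K, a * d - b * c ≠ 0 ∧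
    ∃ F G : Polynomial (vints v hna), GoodRep v hna F G ∧ GoodRed v hna F G ∧
      rmap (liftp v hna F) (liftp v hna G) ∘ mob a b c d = mob a b c d ∘ rmap f g

theorem eval_liftp {K : Type*} [Field K]
    (v : AbsoluteValue K ℝ) (hna : IsNonarchimedean (⇑v))
    (f : Polynomial (vints v hna)) (y : vints v hna) :
    (liftp v hna f).eval (y : K) = ((f.eval y : vints v hna) : K) := by
  have := Polynomial.eval_map_apply (p := f) (vints v hna).subtype y
  exact this

theorem mem_vmax {K : Type*} [Field K]
    (v : AbsoluteValue K ℝ) (hna : IsNonarchimedean (⇑v)) (y : vints v hna) :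
    y ∈ vmax v hna ↔ v (y : K) < 1 := Iff.rfl

theorem no_common {K : Type*} [Field K]
    (v : AbsoluteValue K ℝ) (hna : IsNonarchimedean (⇑v))
    (f g : Polynomial (vints v hna))
    (h : IsCoprime (redp v hna f) (redp v hna g)) (y : vints v hna)
    (hf : v ((f.eval y : vints v hna) : K) < 1) (hg : v ((g.eval y : vints v hna) : K) < 1) :
    False := by
  obtain ⟨a, b, hab⟩ := h
  have h1 := congrArg (Polynomial.eval (Ideal.Quotient.mk (vmax v hna) y)) hab
  have e : ∀ p : Polynomial (vints v hna), v ((p.eval y : vints v hna) : K) < 1 →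
      (redp v hna p).eval (Ideal.Quotient.mk (vmax v hna) y) = 0 := by
    intro p hp
    unfold redp
    rw [Polynomial.eval_map_apply]
    exact Ideal.Quotient.eq_zero_iff_mem.2 hp
  rw [eval_add, eval_mul, eval_mul, e f hf, e g hg, eval_one, mul_zero, mul_zero, add_zero,
    eq_comm, ← map_one (Ideal.Quotient.mk (vmax v hna)), Ideal.Quotient.eq_zero_iff_mem,
    mem_vmax] at h1
  simp at h1

theorem euler {K : Type*} [Field K] (x : K) (hx : x ≠ 0) (d : ℕ) (f : Polynomial K)
    (hf : f.natDegree ≤ d) :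
    f.eval x = x ^ d * (reflect d f).eval x⁻¹ ∧
    x * (derivative f).eval x
      = d * f.eval x - x ^ d * x⁻¹ * (derivative (reflect d f)).eval x⁻¹ := by
  refine Polynomial.induction_with_natDegree_le (fun f : Polynomial K =>
    f.eval x = x ^ d * (reflect d f).eval x⁻¹ ∧
    x * (derivative f).eval x
      = d * f.eval x - x ^ d * x⁻¹ * (derivative (reflect d f)).eval x⁻¹) d ?_ ?_ ?_ f hf
  · simp
  · intro n r hr hn
    obtain ⟨m, rfl⟩ := Nat.exists_eq_add_of_le hn
    have h1 : revAt (n + m) n = m := by rw [revAt_le hn]; omega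
    have key : ∀ (z : K) (k : ℕ), z * (k * z ^ (k - 1)) = k * z ^ k := by
      intro z k
      cases k with
      | zero => simp
      | succ k => simp [pow_succ]; ring
    rw [reflect_C_mul_X_pow, h1]
    simp only [derivative_C_mul_X_pow, eval_mul, eval_C, eval_pow, eval_X]
    have hm : x ^ m * x⁻¹ ^ m = 1 := by rw [← mul_pow, mul_inv_cancel₀ hx, one_pow]
    have k1 := key x n
    have k2 := key x⁻¹ m
    constructor
    · rw [pow_add]; linear_combination (-(r * x ^ n)) * hm
    · push_cast
      rw [pow_add]
      linear_combination r * k1 + x ^ n * x ^ m * r * k2 + x ^ n * r * m * hm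
  · rintro p q hpq hq ⟨a1, a2⟩ ⟨b1, b2⟩
    simp only [reflect_add, derivative_add, eval_add]
    exact ⟨by linear_combination a1 + b1, by linear_combination a2 + b2⟩

theorem eval_lt_coeff_lt {K : Type*} [Field K]
    (v : AbsoluteValue K ℝ) (hna : IsNonarchimedean (⇑v))
    (f : Polynomial (vints v hna)) (d : ℕ) (y : vints v hna) (hy : y ∈ vmax v hna)
    (h : (reflect d f).eval y ∈ vmax v hna) : f.coeff d ∈ vmax v hna := by
  have h0 : (reflect d f).coeff 0 = f.coeff d := by
    rw [coeff_reflect, revAt_le (Nat.zero_le d), Nat.sub_zero]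
  have h2 : y - 0 ∣ (reflect d f).eval y - (reflect d f).eval 0 := sub_dvd_eval_sub _ _ _
  rw [sub_zero, ← coeff_zero_eq_eval_zero, h0] at h2
  have h3 := Ideal.mem_of_dvd _ h2 hy
  have := (vmax v hna).sub_mem h h3
  simpa using this

/-- Lemma 2 of the paper: a fixed point `x ∈ K` of a rational function of
good reduction has multiplier of absolute value at most `1`: it is indifferent or attracting,
never repelling. -/
theorem good_reduction_no_repelling_fixed_point {K : Type*} [Field K] [IsAlgClosed K]
    (v : AbsoluteValue K ℝ) (hna : IsNonarchimedean (⇑v))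
    (f g : Polynomial (vints v hna))
    (hrep : GoodRep v hna f g) (hgood : GoodRed v hna f g)
    (x : K) (hfix : rmap (liftp v hna f) (liftp v hna g) (some x) = some x) :
    v (multiplier (liftp v hna f) (liftp v hna g) (some x)) ≤ 1 := by
  obtain ⟨hcop, hdeg⟩ := hgood
  have hg0 : (liftp v hna g).eval x ≠ 0 := by
    intro h
    simp [rmap, h] at hfix
  have hfx : (liftp v hna f).eval x = x * (liftp v hna g).eval x := by
    simp only [rmap, hg0, if_false, Option.some.injEq] at hfix
    rwa [div_eq_iff hg0] at hfix
  have hder : ∀ p : Polynomial (vints v hna),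
      derivative (liftp v hna p) = liftp v hna (derivative p) := fun p => by
    simp [liftp, derivative_map]
  simp only [multiplier]
  by_cases hx : v x ≤ 1
  · obtain ⟨y, rfl⟩ : ∃ y : vints v hna, (y : K) = x := ⟨⟨x, hx⟩, rfl⟩
    have hgy : v ((g.eval y : vints v hna) : K) = 1 := by
      refine le_antisymm (g.eval y).2 (not_lt.1 fun hlt => ?_)
      refine no_common v hna f g hcop y ?_ hlt
      rw [← eval_liftp, hfx, map_mul, eval_liftp]
      exact (mul_le_of_le_one_left (v.nonneg _) hx).trans_lt hlt
    rw [map_div₀, map_pow, eval_liftp v hna g, hgy, one_pow, div_one, hder, hder, eval_sub,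
      eval_mul, eval_mul]
    simp only [eval_liftp]
    exact ((derivative f).eval y * g.eval y - f.eval y * (derivative g).eval y).2
  · have hx1 : 1 < v x := not_le.1 hx
    have hx0 : x ≠ 0 := by rintro rfl; simp at hx1; linarith
    have hy1 : v x⁻¹ < 1 := by rw [map_inv₀]; exact inv_lt_one_of_one_lt₀ hx1
    obtain ⟨y, hy⟩ : ∃ y : vints v hna, (y : K) = x⁻¹ := ⟨⟨x⁻¹, hy1.le⟩, rfl⟩
    have hym : y ∈ vmax v hna := by rw [mem_vmax, hy]; exact hy1
    set d := max f.natDegree g.natDegree with hd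
    have hrefl : ∀ p : Polynomial (vints v hna),
        reflect d (liftp v hna p) = liftp v hna (reflect d p) := fun p => by
      simp [liftp, reflect_map]
    obtain ⟨f1, f2⟩ := euler x hx0 d (liftp v hna f)
      (natDegree_map_le.trans (le_max_left _ _))
    obtain ⟨g1, g2⟩ := euler x hx0 d (liftp v hna g)
      (natDegree_map_le.trans (le_max_right _ _))
    rw [hrefl, ← hy, eval_liftp] at f1 g1
    rw [hrefl, hder (reflect d _), ← hy, eval_liftp] at f2 g2
    set F := (reflect d f).eval y with hF
    set G := (reflect d g).eval y with hG
    set F' := (derivative (reflect d f)).eval y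
    set G' := (derivative (reflect d g)).eval y
    have hxy : x * (y : K) = 1 := by rw [hy, mul_inv_cancel₀ hx0]
    have hxd : x ^ d ≠ 0 := pow_ne_zero _ hx0
    have hGF : (G : K) = y * F := by
      apply mul_left_cancel₀ hxd
      rw [f1, g1] at hfx
      linear_combination (-(y : K)) * hfx - x ^ d * G * hxy
    have hF1 : v (F : K) = 1 := by
      refine le_antisymm F.2 (not_lt.1 fun hlt => ?_)
      have hFm : F ∈ vmax v hna := hlt
      have hGm : G ∈ vmax v hna := by
        have : G = y * F := Subtype.ext hGF
        rw [this]; exact Ideal.mul_mem_left _ _ hFm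
      have cf := eval_lt_coeff_lt v hna f d y hym hFm
      have cg := eval_lt_coeff_lt v hna g d y hym hGm
      have cf' : (redp v hna f).coeff d = 0 := by
        rw [redp, coeff_map]; exact Ideal.Quotient.eq_zero_iff_mem.2 cf
      have cg' : (redp v hna g).coeff d = 0 := by
        rw [redp, coeff_map]; exact Ideal.Quotient.eq_zero_iff_mem.2 cg
      rcases Nat.eq_zero_or_pos d with h0 | hpos
      · have hfc : f.natDegree ≤ 0 := by omega
        have hgc : g.natDegree ≤ 0 := by omega
        rw [h0] at cf cg
        refine no_common v hna f g hcop 0 ?_ ?_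
        · rw [← coeff_zero_eq_eval_zero]; exact cf
        · rw [← coeff_zero_eq_eval_zero]; exact cg
      · rcases max_choice (redp v hna f).natDegree (redp v hna g).natDegree with hm | hm
        · rw [hm] at hdeg
          rw [← hdeg, coeff_natDegree, leadingCoeff_eq_zero] at cf'
          rw [cf', natDegree_zero] at hdeg
          omega
        · rw [hm] at hdeg
          rw [← hdeg, coeff_natDegree, leadingCoeff_eq_zero] at cg'
          rw [cg', natDegree_zero] at hdeg
          omega
    have hF0 : (F : K) ≠ 0 := by
      intro h; rw [h] at hF1; simp at hF1
    have hmain : (derivative (liftp v hna f) * liftp v hna g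
        - liftp v hna f * derivative (liftp v hna g)).eval x / (liftp v hna g).eval x ^ 2
        = ((F * G' - F' * G : vints v hna) : K) / F ^ 2 := by
      rw [div_eq_div_iff (pow_ne_zero _ hg0) (pow_ne_zero _ hF0)]
      apply mul_left_cancel₀ hx0
      simp only [eval_sub, eval_mul]
      have e : x * ((derivative (liftp v hna f)).eval x * (liftp v hna g).eval x
          - (liftp v hna f).eval x * (derivative (liftp v hna g)).eval x)
          = (x ^ d) ^ 2 * y * (F * G' - F' * G) := by
        rw [g1] at g2 ⊢
        rw [f1] at f2 ⊢
        linear_combination (x ^ d * (G : K)) * f2 - (x ^ d * (F : K)) * g2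
      rw [← mul_assoc, e, g1, hGF]
      push_cast
      rw [hGF]
      linear_combination (-((x ^ d) ^ 2 * y * (F * G' - F' * (y * F)) * (F : K) ^ 2)) * hxy
    rw [hmain, map_div₀, map_pow, hF1, one_pow, div_one]
    exact (F * G' - F' * G).2

end PaperPGR
end
end

section
/- Let ψ ∈ K̄(z) be a rational function of good reduction with ψ(0) = 0 and |ψ'(0)|_v < 1 (so 0 is an attracting fixed point). Then ψ has no other fixed point in the open unit disk: there is no y ∈ K̄ with 0 < |y|_v < 1 and ψ(y) = y. -/
open Polynomial

noncomputable section

namespace PaperPGR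

variable {K : Type*} [Field K]

/-- if `ψ` has good reduction, `ψ(0) = 0`, and `|ψ'(0)|_v < 1` (so `0` is an
attracting fixed point), then `ψ` has no other fixed point in the open unit disk. -/
theorem good_reduction_attracting_unique_fixed_in_disk {K : Type*} [Field K] [IsAlgClosed K]
    (v : AbsoluteValue K ℝ) (hna : IsNonarchimedean (⇑v))
    (f g : Polynomial (vints v hna))
    (hrep : GoodRep v hna f g) (hgood : GoodRed v hna f g)
    (hfix : rmap (liftp v hna f) (liftp v hna g) (some 0) = some 0)
    (hattr : v (multiplier (liftp v hna f) (liftp v hna g) (some 0)) < 1) :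
    ¬ ∃ y : K, 0 < v y ∧ v y < 1 ∧
      rmap (liftp v hna f) (liftp v hna g) (some y) = some y := by
  rintro ⟨y, hy0, hy1, hy⟩
  have hev : ∀ (p : Polynomial (vints v hna)) (x : vints v hna),
      (liftp v hna p).eval (x : K) = ((p.eval x : vints v hna) : K) := by
    intro p x
    exact Polynomial.eval_map_apply (vints v hna).subtype x
  have key : ∀ x z : K, rmap (liftp v hna f) (liftp v hna g) (some x) = some z →
      (liftp v hna g).eval x ≠ 0 ∧
        (liftp v hna f).eval x = z * (liftp v hna g).eval x := by
    intro x z h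
    simp only [rmap] at h
    split_ifs at h with h0
    refine ⟨h0, ?_⟩
    have h2 := Option.some.inj h
    rw [← h2]
    field_simp
  obtain ⟨hg0, hf0⟩ := key _ _ hfix
  obtain ⟨-, hfy⟩ := key _ _ hy
  set Y : vints v hna := ⟨y, hy1.le⟩ with hY
  have hyne : Y ≠ 0 := by
    intro h
    have : y = 0 := congrArg Subtype.val h
    simp [this] at hy0
  have hYm : Y ∈ vmax v hna := hy1
  have e0 : ∀ p : Polynomial (vints v hna),
      (liftp v hna p).eval 0 = ((p.coeff 0 : vints v hna) : K) := by
    intro p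
    rw [Polynomial.coeff_zero_eq_eval_zero, ← hev]
    rfl
  have d0 : ∀ p : Polynomial (vints v hna),
      (derivative (liftp v hna p)).eval 0 = ((p.coeff 1 : vints v hna) : K) := by
    intro p
    rw [← Polynomial.coeff_zero_eq_eval_zero, Polynomial.coeff_derivative]
    simp [liftp]
  have hfc : f.coeff 0 = 0 := by
    rw [zero_mul, e0] at hf0
    exact Subtype.ext hf0
  have hfy' : f.eval Y = Y * g.eval Y := by
    apply Subtype.ext
    have := hev f Y
    have h3 := hev g Y
    change (liftp v hna f).eval y = _ at this
    change (liftp v hna g).eval y = _ at h3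
    rw [← this, hfy, h3]
    rfl
  -- the constant coefficient of g is a unit
  have hgm : g.coeff 0 ∉ vmax v hna := by
    intro hm
    obtain ⟨a, b, hab⟩ := hgood.1
    have h1 := congrArg (fun p => Polynomial.coeff p 0) hab
    simp only [redp, Polynomial.coeff_add, Polynomial.mul_coeff_zero, Polynomial.coeff_map, hfc,
      map_zero, mul_zero, zero_add, Ideal.Quotient.eq_zero_iff_mem.mpr hm,
      Polynomial.coeff_one_zero] at h1
    have h2 : (1 : vints v hna) ∈ vmax v hna := by
      rw [← Ideal.Quotient.eq_zero_iff_mem, map_one]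
      exact h1.symm
    have h3 : v (((1 : vints v hna)) : K) < 1 := h2
    simp at h3
  have hgv : v ((g.coeff 0 : vints v hna) : K) = 1 :=
    le_antisymm (g.coeff 0).2 (not_lt.mp hgm)
  have hf1 : f.coeff 1 ∈ vmax v hna := by
    have h := hattr
    simp only [multiplier, Polynomial.eval_sub, Polynomial.eval_mul, e0, d0, hfc] at h
    change v ((f.coeff 1 : vints v hna) : K) < 1
    simpa [hgv] using h
  have hf2 : f.divX.eval Y = g.eval Y := by
    have h := congrArg (Polynomial.eval Y) (Polynomial.divX_mul_X_add f)
    simp only [Polynomial.eval_add, Polynomial.eval_mul, Polynomial.eval_X, hfc, map_zero,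
      Polynomial.eval_zero, add_zero] at h
    apply mul_left_cancel₀ hyne
    rw [← hfy', ← h, mul_comm]
  have hmod : ∀ p : Polynomial (vints v hna), p.eval Y - p.coeff 0 ∈ vmax v hna := by
    intro p
    have h := congrArg (Polynomial.eval Y) (Polynomial.divX_mul_X_add p)
    simp only [Polynomial.eval_add, Polynomial.eval_mul, Polynomial.eval_X,
      Polynomial.eval_C] at h
    rw [← h, add_sub_cancel_right]
    exact Ideal.mul_mem_left _ _ hYm
  apply hgm
  have h1 := hmod f.divX
  rw [Polynomial.coeff_divX, hf2] at h1
  have h3 := (vmax v hna).sub_mem ((vmax v hna).add_mem h1 hf1) (hmod g)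
  simpa using h3
end PaperPGR
end
end

section
/- Let ψ ∈ K̄(z) be a rational function of good reduction with ψ(0) = 0 and |ψ'(0)|_v < 1. Then for every y ∈ K̄ with 0 < |y|_v < 1, one has |ψ(y)|_v < |y|_v; i.e. ψ is strictly contracting toward 0 on the punctured open unit disk. -/
open Polynomial

noncomputable section

namespace PaperPGR

variable {K : Type*} [Field K]

/-- if `ψ` has good reduction, `ψ(0) = 0`, and `|ψ'(0)|_v < 1`, then `ψ` is
strictly contracting toward `0` on the punctured open unit disk: for `0 < |y|_v < 1` one has
`ψ(y) ∈ K` with `|ψ(y)|_v < |y|_v`. -/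
theorem good_reduction_attracting_contracts {K : Type*} [Field K] [IsAlgClosed K]
    (v : AbsoluteValue K ℝ) (hna : IsNonarchimedean (⇑v))
    (f g : Polynomial (vints v hna))
    (hrep : GoodRep v hna f g) (hgood : GoodRed v hna f g)
    (hfix : rmap (liftp v hna f) (liftp v hna g) (some 0) = some 0)
    (hattr : v (multiplier (liftp v hna f) (liftp v hna g) (some 0)) < 1) :
    ∀ y : K, 0 < v y → v y < 1 →
      ∃ w : K, rmap (liftp v hna f) (liftp v hna g) (some y) = some w ∧ v w < v y := by
  intro y hy0 hy1
  have hone : ∀ t : vints v hna, v (t : K) ≤ 1 := fun t => t.2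
  obtain ⟨z, rfl⟩ : ∃ z : vints v hna, (z : K) = y := ⟨⟨y, hy1.le⟩, rfl⟩
  have hev : ∀ (p : Polynomial (vints v hna)) (t : vints v hna),
      (liftp v hna p).eval (t : K) = ((p.eval t : vints v hna) : K) := by
    intro p t
    exact Polynomial.eval_map_apply (f := (vints v hna).subtype) (p := p) t
  have hsplit : ∀ (p : Polynomial (vints v hna)) (t : vints v hna),
      p.eval t = t * p.divX.eval t + p.coeff 0 := by
    intro p t
    have h := congrArg (Polynomial.eval t) (Polynomial.X_mul_divX_add p)
    rw [Polynomial.eval_add, Polynomial.eval_mul, Polynomial.eval_X, Polynomial.eval_C] at h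
    exact h.symm
  have hev0 : ∀ (p : Polynomial (vints v hna)),
      (liftp v hna p).eval 0 = ((p.coeff 0 : vints v hna) : K) := by
    intro p
    have := hev p 0
    rw [hsplit p 0] at this
    simpa using this
  have hder0 : ∀ (p : Polynomial (vints v hna)),
      (derivative (liftp v hna p)).eval 0 = ((p.coeff 1 : vints v hna) : K) := by
    intro p
    rw [← Polynomial.coeff_zero_eq_eval_zero, Polynomial.coeff_derivative]
    simp [liftp]
  have hfg : (g.coeff 0 : K) ≠ 0 ∧ (f.coeff 0 : K) = 0 := by
    simp only [rmap, hev0] at hfix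
    split_ifs at hfix with h
    rw [hev0] at h
    refine ⟨h, ?_⟩
    have h2 := Option.some.inj hfix
    exact (div_eq_zero_iff.mp h2).resolve_right h
  obtain ⟨hg0, hf0⟩ := hfg
  have hf0' : f.coeff 0 = 0 := Subtype.ext hf0
  have hvg : v (g.coeff 0 : K) = 1 := by
    refine le_antisymm (hone _) ?_
    by_contra! hlt
    obtain ⟨⟨a, b, hab⟩, -⟩ := hgood
    have hmem : g.coeff 0 ∈ vmax v hna := hlt
    have h0 := congrArg (fun p => Polynomial.coeff p 0) hab
    simp only [redp, Polynomial.coeff_add, Polynomial.mul_coeff_zero, Polynomial.coeff_map, hf0',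
      Ideal.Quotient.eq_zero_iff_mem.mpr hmem, map_zero, mul_zero, add_zero,
      Polynomial.coeff_one_zero] at h0
    have h1 : (1 : vints v hna) ∈ vmax v hna := by
      rw [← Ideal.Quotient.eq_zero_iff_mem, map_one]
      exact h0.symm
    have h2 : v ((1 : vints v hna) : K) < 1 := h1
    simp at h2
  have hvf1 : v (f.coeff 1 : K) < 1 := by
    simp only [multiplier, Polynomial.eval_sub, Polynomial.eval_mul, hev0, hder0, hf0, zero_mul,
      sub_zero, map_div₀, map_mul, map_pow, hvg] at hattr
    simpa using hattr
  have hz : ∀ t : vints v hna, v ((z : K) * (t : K)) < 1 := by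
    intro t
    rw [map_mul]
    nlinarith [hone t, v.nonneg (t : K)]
  have hvgz : v ((g.eval z : vints v hna) : K) = 1 := by
    refine le_antisymm (hone _) ?_
    by_contra! hlt
    have h1 : (g.coeff 0 : K) = ((g.eval z : vints v hna) : K) + (z : K) *
        ((-(g.divX.eval z) : vints v hna) : K) := by
      rw [hsplit g z]; push_cast; ring
    have h2 := hna ((g.eval z : vints v hna) : K) ((z : K) *
        ((-(g.divX.eval z) : vints v hna) : K))
    rw [← h1, hvg] at h2
    exact absurd h2 (not_le.mpr (max_lt hlt (hz _)))
  have hgz : ((g.eval z : vints v hna) : K) ≠ 0 := by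
    intro h
    rw [h, map_zero] at hvgz
    exact zero_ne_one hvgz
  refine ⟨((f.eval z : vints v hna) : K) / ((g.eval z : vints v hna) : K), ?_, ?_⟩
  · simp only [rmap, hev]
    rw [if_neg (by rw [hev]; exact hgz)]
  · rw [map_div₀, hvgz, div_one, hsplit f z, hf0', hsplit f.divX z, Polynomial.coeff_divX]
    push_cast
    rw [add_zero, map_mul]
    have h2 := hna ((z : K) * ((f.divX.divX.eval z : vints v hna) : K)) (f.coeff (0 + 1) : K)
    have h3 := lt_of_le_of_lt h2 (max_lt (hz _) hvf1)
    nlinarith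

end PaperPGR
end
end

section
/- Let φ ∈ K̄(z) be a rational function of degree d ≥ 2, and suppose φ has an indifferent fixed point x ∈ K̄ (i.e. φ(x) = x and |φ'(x)|_v = 1). Choose y₁ ∈ K̄ with φ(y₁) = x and y₁ ≠ x, and y₂ ∈ K̄ ∪ {∞} with φ(y₂) = y₁ (such choices exist, and x, y₁, y₂ are pairwise distinct). Let h be the unique Möbius transformation over K̄ with h(x) = 0, h(y₁) = 1, h(y₂) = ∞, and set ψ = h ∘ φ ∘ h⁻¹. Then φ has potentially good reduction if and only if ψ has good reduction. -/
open Polynomial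

noncomputable section

namespace PaperPGR

variable {K : Type*} [Field K]

section aux

variable {K : Type*} [Field K]

/-- Homogenization of `p` in degree `n` evaluated at `(s, t)`. -/
def hom (n : ℕ) (p : Polynomial K) (s t : K) : K :=
  ∑ i ∈ Finset.range (n + 1), p.coeff i * s ^ i * t ^ (n - i)

/-- Homogenization of `p` in degree `n` evaluated at polynomials. -/
def pol (n : ℕ) (p A B : Polynomial K) : Polynomial K :=
  ∑ i ∈ Finset.range (n + 1), C (p.coeff i) * A ^ i * B ^ (n - i)

theorem eval_pol (n : ℕ) (p A B : Polynomial K) (z : K) :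
    (pol n p A B).eval z = hom n p (A.eval z) (B.eval z) := by
  simp [pol, hom, eval_finsetSum]

theorem hom_smul (n : ℕ) (p : Polynomial K) (k s t : K) :
    hom n p (k * s) (k * t) = k ^ n * hom n p s t := by
  unfold hom
  rw [Finset.mul_sum]
  refine Finset.sum_congr rfl fun i hi => ?_
  have hi : i ≤ n := by simpa [Nat.lt_succ_iff] using hi
  obtain ⟨j, rfl⟩ := Nat.exists_eq_add_of_le hi
  simp only [Nat.add_sub_cancel_left]
  ring

theorem hom_zero_right (n : ℕ) (p : Polynomial K) (s : K) :
    hom n p s 0 = p.coeff n * s ^ n := by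
  unfold hom
  rw [Finset.sum_range_succ, Finset.sum_eq_zero]
  · simp
  · intro i hi
    have : n - i ≠ 0 := by have := Finset.mem_range.1 hi; omega
    simp [this]

theorem hom_zero_left (n : ℕ) (p : Polynomial K) (t : K) :
    hom n p 0 t = p.coeff 0 * t ^ n := by
  unfold hom
  rw [Finset.sum_range_succ', Finset.sum_eq_zero]
  · simp
  · intro i hi
    simp

theorem hom_one (n : ℕ) (p : Polynomial K) (hp : p.natDegree ≤ n) (s : K) :
    hom n p s 1 = p.eval s := by
  rw [eval_eq_sum_range' (Nat.lt_succ_of_le hp)]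
  simp [hom]

theorem hom_ne (n : ℕ) (p : Polynomial K) (hp : p.natDegree ≤ n) (s t : K) (ht : t ≠ 0) :
    hom n p s t = t ^ n * p.eval (s / t) := by
  rw [← hom_one n p hp, ← hom_smul]
  congr 1 <;> field_simp

theorem hom_add (n : ℕ) (p q : Polynomial K) (a b s t : K) :
    hom n (C a * p + C b * q) s t = a * hom n p s t + b * hom n q s t := by
  unfold hom
  rw [Finset.mul_sum, Finset.mul_sum, ← Finset.sum_add_distrib]
  refine Finset.sum_congr rfl fun i hi => ?_
  simp
  ring

theorem lin_deg (a b : K) : (C a * X + C b).natDegree ≤ 1 := natDegree_linear_le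

theorem pol_term_deg (n i : ℕ) (hi : i ≤ n) (r a b c d : K) :
    (C r * (C a * X + C b) ^ i * (C c * X + C d) ^ (n - i)).natDegree ≤ n := by
  have h1 : ((C a * X + C b) ^ i).natDegree ≤ i := by
    simpa using natDegree_pow_le_of_le i (lin_deg a b)
  have h2 : ((C c * X + C d) ^ (n - i)).natDegree ≤ n - i := by
    simpa using natDegree_pow_le_of_le (n - i) (lin_deg c d)
  have h3 : (C r * (C a * X + C b) ^ i).natDegree ≤ i := (natDegree_C_mul_le _ _).trans h1
  have := natDegree_mul_le_of_le h3 h2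
  omega

theorem pol_deg (n : ℕ) (p : Polynomial K) (a b c d : K) :
    (pol n p (C a * X + C b) (C c * X + C d)).natDegree ≤ n := by
  refine natDegree_sum_le_of_forall_le _ _ fun i hi => ?_
  exact pol_term_deg n i (by simpa [Nat.lt_succ_iff] using hi) _ a b c d

theorem lin_pow_coeff (i : ℕ) (a b : K) : ((C a * X + C b) ^ i).coeff i = a ^ i := by
  have := coeff_pow_of_natDegree_le (m := i) (lin_deg a b)
  simpa using this

theorem pol_coeff (n : ℕ) (p : Polynomial K) (a b c d : K) :
    (pol n p (C a * X + C b) (C c * X + C d)).coeff n = hom n p a c := by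
  unfold pol hom
  rw [finsetSum_coeff]
  refine Finset.sum_congr rfl fun i hi => ?_
  have hi : i ≤ n := by simpa [Nat.lt_succ_iff] using hi
  obtain ⟨j, rfl⟩ := Nat.exists_eq_add_of_le hi
  simp only [Nat.add_sub_cancel_left]
  have h1 : ((C a * X + C b) ^ i).natDegree ≤ i := by
    simpa using natDegree_pow_le_of_le i (lin_deg a b)
  have h2 : ((C c * X + C d) ^ j).natDegree ≤ j := by
    simpa using natDegree_pow_le_of_le j (lin_deg c d)
  rw [mul_assoc, coeff_C_mul, coeff_mul_add_eq_of_natDegree_le h1 h2, lin_pow_coeff,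
    lin_pow_coeff, mul_assoc]

theorem hom_pol (n : ℕ) (p : Polynomial K) (a b c d s t : K) :
    hom n (pol n p (C a * X + C b) (C c * X + C d)) s t
      = hom n p (a * s + b * t) (c * s + d * t) := by
  by_cases ht : t = 0
  · subst ht
    rw [hom_zero_right, pol_coeff, mul_comm, ← hom_smul]
    congr 1 <;> ring
  · rw [hom_ne n _ (pol_deg n p a b c d) s t ht, eval_pol, ← hom_smul]
    congr 1 <;> (simp; field_simp)

open Classical in
/-- The point of `P¹` with homogeneous coordinates `(s : t)`. -/
def pt (s t : K) : Option K := if t = 0 then none else some (s / t)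

theorem pt_smul (k s t : K) (hk : k ≠ 0) : pt (k * s) (k * t) = pt s t := by
  unfold pt
  by_cases ht : t = 0
  · simp [ht]
  · simp [ht, hk, mul_div_mul_left]

theorem pt_cross {s t s' t' : K} (h : pt s t = pt s' t') : s * t' = s' * t := by
  unfold pt at h
  by_cases ht : t = 0 <;> by_cases ht' : t' = 0 <;> simp [ht, ht'] at h ⊢
  field_simp at h
  linear_combination h

theorem rmap_some (f g : Polynomial K) (z : K) :
    rmap f g (some z) = pt (f.eval z) (g.eval z) := rfl

theorem rmap_pt (n : ℕ) (hn : 1 ≤ n) (p q : Polynomial K) (hp : p.natDegree ≤ n)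
    (hq : q.natDegree ≤ n) (hpq : p.coeff n ≠ 0 ∨ q.coeff n ≠ 0) (s t : K)
    (hst : s ≠ 0 ∨ t ≠ 0) :
    rmap p q (pt s t) = pt (hom n p s t) (hom n q s t) := by
  by_cases ht : t = 0
  · subst ht
    have hs : s ≠ 0 := by simpa using hst
    rw [hom_zero_right, hom_zero_right, mul_comm, mul_comm (q.coeff n), pt_smul _ _ _ (pow_ne_zero n hs)]
    simp only [pt, if_true, rmap]
    by_cases hqn : q.coeff n = 0
    · have hpn : p.coeff n ≠ 0 := by tauto
      have h1 : p.natDegree = n := le_antisymm hp (le_natDegree_of_ne_zero hpn)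
      have h2 : q.natDegree < n := by
        refine lt_of_le_of_ne hq fun h => ?_
        have : q.leadingCoeff = 0 := by rw [leadingCoeff, h, hqn]
        rw [leadingCoeff_eq_zero] at this
        subst this
        simp at h
        omega
      simp [hqn, h1, h2]
    · have h1 : q.natDegree = n := le_antisymm hq (le_natDegree_of_ne_zero hqn)
      simp [hqn, h1, leadingCoeff, not_lt.2 hp]
  · rw [hom_ne n p hp s t ht, hom_ne n q hq s t ht, pt_smul _ _ _ (pow_ne_zero n ht)]
    simp only [pt, ht, if_false]
    rfl

theorem pt_exists (P : Option K) : ∃ s t : K, (s ≠ 0 ∨ t ≠ 0) ∧ P = pt s t := by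
  cases P with
  | none => exact ⟨1, 0, by simp, by simp [pt]⟩
  | some z => exact ⟨z, 1, by simp, by simp [pt]⟩

theorem mob_pt (a b c d : K) (h : a * d - b * c ≠ 0) (s t : K) (hst : s ≠ 0 ∨ t ≠ 0) :
    mob a b c d (pt s t) = pt (a * s + b * t) (c * s + d * t) := by
  unfold mob
  rw [rmap_pt 1 le_rfl _ _ (lin_deg a b) (lin_deg c d) _ s t hst]
  · congr 1 <;> (simp [hom, Finset.sum_range_succ]; ring)
  · by_contra hh
    push Not at hh
    simp at hh
    apply h
    simp [hh.1, hh.2]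

theorem lin_ne (a b c d : K) (h : a * d - b * c ≠ 0) (s t : K) (hst : s ≠ 0 ∨ t ≠ 0) :
    a * s + b * t ≠ 0 ∨ c * s + d * t ≠ 0 := by
  by_contra hh
  push Not at hh
  obtain ⟨h1, h2⟩ := hh
  have e1 : (a * d - b * c) * s = 0 := by linear_combination d * h1 - b * h2
  have e2 : (a * d - b * c) * t = 0 := by linear_combination a * h2 - c * h1
  simp [h] at e1 e2
  tauto

theorem mob_comp (a b c d a' b' c' d' : K) (h : a * d - b * c ≠ 0)
    (h' : a' * d' - b' * c' ≠ 0) :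
    mob (a * a' + b * c') (a * b' + b * d') (c * a' + d * c') (c * b' + d * d')
      = mob a b c d ∘ mob a' b' c' d' := by
  funext P
  obtain ⟨s, t, hst, rfl⟩ := pt_exists P
  rw [Function.comp_apply, mob_pt a' b' c' d' h' s t hst,
    mob_pt a b c d h _ _ (lin_ne a' b' c' d' h' s t hst), mob_pt _ _ _ _ _ s t hst]
  · congr 1 <;> ring
  · intro hh
    apply mul_ne_zero h h'
    linear_combination hh

theorem mob_inj (a b c d : K) (h : a * d - b * c ≠ 0) : Function.Injective (mob a b c d) := by
  intro P Q hPQ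
  have key : ∀ P : Option K, mob d (-b) (-c) a (mob a b c d P) = P := by
    intro P
    obtain ⟨s, t, hst, rfl⟩ := pt_exists P
    rw [mob_pt a b c d h s t hst, mob_pt _ _ _ _ _ _ _ (lin_ne a b c d h s t hst)]
    · rw [← pt_smul _ s t h]
      congr 1 <;> ring
    · intro hh; apply h; linear_combination hh
  rw [← key P, hPQ, key]

theorem mob_scale (k a b c d : K) (hk : k ≠ 0) (h : a * d - b * c ≠ 0) :
    mob (k * a) (k * b) (k * c) (k * d) = mob a b c d := by
  funext P
  obtain ⟨s, t, hst, rfl⟩ := pt_exists P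
  rw [mob_pt a b c d h s t hst, mob_pt _ _ _ _ _ s t hst,
    ← pt_smul k (a * s + b * t) (c * s + d * t) hk]
  · congr 1 <;> ring
  · intro hh
    apply mul_ne_zero (mul_ne_zero hk hk) h
    linear_combination hh

theorem pt_eq_none {s t : K} (h : pt s t = none) : t = 0 := by
  by_contra ht
  simp [pt, ht] at h

theorem pt_eq_some {s t z : K} (h : pt s t = some z) : t ≠ 0 ∧ s = z * t := by
  by_cases ht : t = 0
  · simp [pt, ht] at h
  · simp [pt, ht] at h
    exact ⟨ht, by rw [← h]; field_simp⟩

theorem some_eq_pt (z : K) : some z = pt z 1 := by simp [pt]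

theorem mob_some_iff (a b c d : K) (h : a * d - b * c ≠ 0) (z w : K)
    (hh : mob a b c d (some z) = some w) :
    c * z + d ≠ 0 ∧ a * z + b = w * (c * z + d) := by
  rw [some_eq_pt z, mob_pt _ _ _ _ h _ _ (by simp)] at hh
  simpa using pt_eq_some hh

/-- Uniqueness of the Möbius map sending three points to `0, 1, ∞`. -/
theorem mob_unique (x y : K) (hne : y ≠ x) (P : Option K) (a b c d a' b' c' d' : K)
    (h : a * d - b * c ≠ 0) (h' : a' * d' - b' * c' ≠ 0)
    (h0 : mob a b c d (some x) = some 0) (h1 : mob a b c d (some y) = some 1)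
    (hinf : mob a b c d P = none)
    (h0' : mob a' b' c' d' (some x) = some 0) (h1' : mob a' b' c' d' (some y) = some 1)
    (hinf' : mob a' b' c' d' P = none) :
    mob a b c d = mob a' b' c' d' := by
  obtain ⟨s, t, hst, rfl⟩ := pt_exists P
  rw [mob_pt _ _ _ _ h _ _ hst] at hinf
  rw [mob_pt _ _ _ _ h' _ _ hst] at hinf'
  have e3 := pt_eq_none hinf
  have e3' := pt_eq_none hinf'
  obtain ⟨-, e1⟩ := mob_some_iff _ _ _ _ h _ _ h0
  obtain ⟨-, e1'⟩ := mob_some_iff _ _ _ _ h' _ _ h0'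
  obtain ⟨-, e2⟩ := mob_some_iff _ _ _ _ h _ _ h1
  obtain ⟨-, e2'⟩ := mob_some_iff _ _ _ _ h' _ _ h1'
  have ha : a ≠ 0 := by
    rintro rfl
    apply h
    have : b = 0 := by linear_combination e1
    simp [this]
  have ha' : a' ≠ 0 := by
    rintro rfl
    apply h'
    have : b' = 0 := by linear_combination e1'
    simp [this]
  have hb : b = -a * x := by linear_combination e1
  have hb' : b' = -a' * x := by linear_combination e1'
  subst hb hb'
  have hw : s - y * t ≠ 0 := by
    intro hw
    have hs : s = y * t := by linear_combination hw
    have : a * (y - x) * t = 0 := by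
      rw [hs] at e3
      linear_combination t * e2 + e3
    have ht : t = 0 := by
      simpa [ha, sub_ne_zero.2 hne] using this
    simp [hs, ht] at hst
  have hc : c * (s - y * t) = - a * (y - x) * t := by linear_combination e3 + t * e2
  have hc' : c' * (s - y * t) = - a' * (y - x) * t := by linear_combination e3' + t * e2'
  have hcc : c = a / a' * c' := by
    apply mul_right_cancel₀ hw
    rw [hc, mul_assoc (a / a'), hc']
    field_simp
  have hdd : d = a / a' * d' := by
    have e4 : d = a * (y - x) - c * y := by linear_combination -e2
    have e4' : d' = a' * (y - x) - c' * y := by linear_combination -e2'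
    rw [e4, e4', hcc]
    field_simp
  rw [← mob_scale (a / a') a' _ c' d' (div_ne_zero ha ha') h', ← hcc, ← hdd]
  congr 1 <;> field_simp

end aux

section val

variable {K : Type*} [Field K] (v : AbsoluteValue K ℝ)

theorem sum_lt (hna : IsNonarchimedean (⇑v)) {ι : Type*} (S : Finset ι) (u : ι → K) (h : ∀ i ∈ S, v (u i) < 1) :
    v (∑ i ∈ S, u i) < 1 := by
  classical
  induction S using Finset.induction_on with
  | empty => simp
  | insert i S hi ih =>
    rw [Finset.sum_insert hi]
    refine lt_of_le_of_lt (hna _ _) (max_lt (h i (by simp)) (ih fun j hj => h j (by simp [hj])))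

theorem sum_le (hna : IsNonarchimedean (⇑v)) {ι : Type*} (S : Finset ι) (u : ι → K) (h : ∀ i ∈ S, v (u i) ≤ 1) :
    v (∑ i ∈ S, u i) ≤ 1 := by
  classical
  induction S using Finset.induction_on with
  | empty => simp
  | insert i S hi ih =>
    rw [Finset.sum_insert hi]
    refine le_trans (hna _ _) (max_le (h i (by simp)) (ih fun j hj => h j (by simp [hj])))

theorem mul_le_one' {x y : K} (hx : v x ≤ 1) (hy : v y ≤ 1) : v (x * y) ≤ 1 := by
  rw [map_mul]
  exact mul_le_one₀ hx (v.nonneg y) hy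

theorem mul_lt_left {x y : K} (hx : v x < 1) (hy : v y ≤ 1) : v (x * y) < 1 := by
  rw [map_mul]
  nlinarith [v.nonneg x, v.nonneg y]

theorem mul_lt_right {x y : K} (hx : v x ≤ 1) (hy : v y < 1) : v (x * y) < 1 := by
  rw [mul_comm]
  exact mul_lt_left v hy hx

theorem pow_le_one' {x : K} (hx : v x ≤ 1) (n : ℕ) : v (x ^ n) ≤ 1 := by
  rw [map_pow]
  exact pow_le_one₀ (v.nonneg x) hx

theorem add_le_one' (hna : IsNonarchimedean (⇑v)) {x y : K} (hx : v x ≤ 1) (hy : v y ≤ 1) : v (x + y) ≤ 1 :=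
  (hna x y).trans (max_le hx hy)

theorem add_lt_one' (hna : IsNonarchimedean (⇑v)) {x y : K} (hx : v x < 1) (hy : v y < 1) : v (x + y) < 1 :=
  (hna x y).trans_lt (max_lt hx hy)

theorem sub_lt_one' (hna : IsNonarchimedean (⇑v)) {x y : K} (hx : v x < 1) (hy : v y < 1) : v (x - y) < 1 := by
  rw [sub_eq_add_neg]
  exact add_lt_one' v hna hx (by simpa using hy)

theorem pow_close (hna : IsNonarchimedean (⇑v)) {t t' : K} (ht : v t ≤ 1) (ht' : v t' ≤ 1) (h : v (t - t') < 1) (k : ℕ) :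
    v (t ^ k - t' ^ k) < 1 := by
  induction k with
  | zero => simp
  | succ k ih =>
    have : t ^ (k + 1) - t' ^ (k + 1) = t * (t ^ k - t' ^ k) + (t - t') * t' ^ k := by ring
    rw [this]
    exact add_lt_one' v hna (mul_lt_right v ht ih) (mul_lt_left v h (pow_le_one' v ht' k))

theorem hom_le (hna : IsNonarchimedean (⇑v)) (n : ℕ) (p : Polynomial K) (hp : ∀ i, v (p.coeff i) ≤ 1) {s t : K}
    (hs : v s ≤ 1) (ht : v t ≤ 1) : v (hom n p s t) ≤ 1 := by
  refine sum_le v hna _ _ fun i _ => ?_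
  exact mul_le_one' v (mul_le_one' v (hp i) (pow_le_one' v hs i)) (pow_le_one' v ht _)

theorem hom_close (hna : IsNonarchimedean (⇑v)) (n : ℕ) (p : Polynomial K) (hp : ∀ i, v (p.coeff i) ≤ 1) {s t s' t' : K}
    (hs : v s ≤ 1) (ht : v t ≤ 1) (hs' : v s' ≤ 1) (ht' : v t' ≤ 1)
    (h1 : v (s - s') < 1) (h2 : v (t - t') < 1) : v (hom n p s t - hom n p s' t') < 1 := by
  unfold hom
  rw [← Finset.sum_sub_distrib]
  refine sum_lt v hna _ _ fun i _ => ?_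
  have : p.coeff i * s ^ i * t ^ (n - i) - p.coeff i * s' ^ i * t' ^ (n - i)
    = p.coeff i * ((s ^ i - s' ^ i) * t ^ (n - i) + s' ^ i * (t ^ (n - i) - t' ^ (n - i))) := by
    ring
  rw [this]
  refine mul_lt_right v (hp i) (add_lt_one' v hna ?_ ?_)
  · exact mul_lt_left v (pow_close v hna hs hs' h1 i) (pow_le_one' v ht _)
  · exact mul_lt_right v (pow_le_one' v hs' i) (pow_close v hna ht ht' h2 _)

theorem hom_lt (hna : IsNonarchimedean (⇑v)) (n : ℕ) (p : Polynomial K) (hp : ∀ i, v (p.coeff i) ≤ 1) {s t s' t' : K}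
    (hs : v s ≤ 1) (ht : v t ≤ 1) (hs' : v s' ≤ 1) (ht' : v t' ≤ 1)
    (h1 : v (s - s') < 1) (h2 : v (t - t') < 1) (h : v (hom n p s t) < 1) :
    v (hom n p s' t') < 1 := by
  have := hom_close v hna n p hp hs ht hs' ht' h1 h2
  have e : hom n p s' t' = hom n p s t - (hom n p s t - hom n p s' t') := by ring
  rw [e]
  exact sub_lt_one' v hna h this

/-- Every point has primitive coordinates. -/
theorem pt_prim (P : Option K) :
    ∃ s t : K, v s ≤ 1 ∧ v t ≤ 1 ∧ (v s = 1 ∨ v t = 1) ∧ (s ≠ 0 ∨ t ≠ 0) ∧ P = pt s t := by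
  cases P with
  | none => exact ⟨1, 0, by simp, by simp, by simp, by simp, by simp [pt]⟩
  | some z =>
    by_cases hz : v z ≤ 1
    · exact ⟨z, 1, hz, by simp, by simp, by simp, by simp [pt]⟩
    · have hz' : 1 < v z := not_le.1 hz
      have hz0 : z ≠ 0 := by rintro rfl; simp at hz'; linarith
      refine ⟨1, z⁻¹, by simp, ?_, by simp, by simp, by simp [pt, hz0]⟩
      rw [map_inv₀]
      exact inv_le_one_of_one_le₀ hz'.le

/-- Analytic form of good reduction. -/
structure GR (n : ℕ) (p q : Polynomial K) : Prop where
  pos : 1 ≤ n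
  dp : p.natDegree ≤ n
  dq : q.natDegree ≤ n
  ip : ∀ i, v (p.coeff i) ≤ 1
  iq : ∀ i, v (q.coeff i) ≤ 1
  prim : ∀ s t, v s ≤ 1 → v t ≤ 1 → (v s = 1 ∨ v t = 1) →
    v (hom n p s t) = 1 ∨ v (hom n q s t) = 1

variable {v} in
theorem GR.coeff {n : ℕ} {p q : Polynomial K} (h : GR v n p q) :
    v (p.coeff n) = 1 ∨ v (q.coeff n) = 1 := by
  have := h.prim 1 0 (by simp) (by simp) (by simp)
  simpa [hom_zero_right] using this

variable {v} in
theorem GR.rmap_pt {n : ℕ} {p q : Polynomial K} (h : GR v n p q) (s t : K)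
    (hst : s ≠ 0 ∨ t ≠ 0) : rmap p q (pt s t) = pt (hom n p s t) (hom n q s t) := by
  refine PaperPGR.rmap_pt n h.pos p q h.dp h.dq ?_ s t hst
  rcases h.coeff with h | h
  · left; intro h0; simp [h0] at h
  · right; intro h0; simp [h0] at h

variable {v} in
theorem GR.ne {n : ℕ} {p q : Polynomial K} (h : GR v n p q) (s t : K)
    (hst : s ≠ 0 ∨ t ≠ 0) : hom n p s t ≠ 0 ∨ hom n q s t ≠ 0 := by
  by_contra hh
  push Not at hh
  have key : ∀ k : K, v (k * s) ≤ 1 → v (k * t) ≤ 1 → (v (k * s) = 1 ∨ v (k * t) = 1) →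
      False := by
    intro k h1 h2 h3
    have := h.prim _ _ h1 h2 h3
    simp [hom_smul, hh.1, hh.2] at this
  rcases le_total (v s) (v t) with hle | hle
  · have ht : t ≠ 0 := by
      rintro rfl
      have : v s = 0 := le_antisymm (by simpa using hle) (v.nonneg s)
      simp at this hst
      tauto
    have h0 : 0 < v t := v.pos ht
    refine key t⁻¹ ?_ ?_ ?_
    · rw [map_mul, map_inv₀, inv_mul_le_iff₀ h0]; simpa using hle
    · simp [ht]
    · simp [ht]
  · have hs : s ≠ 0 := by
      rintro rfl
      have : v t = 0 := le_antisymm (by simpa using hle) (v.nonneg t)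
      simp at this hst
      tauto
    have h0 : 0 < v s := v.pos hs
    refine key s⁻¹ ?_ ?_ ?_
    · simp [hs]
    · rw [map_mul, map_inv₀, inv_mul_le_iff₀ h0]; simpa using hle
    · simp [hs]

theorem lin_prim (hna : IsNonarchimedean (⇑v)) (a b c d : K) (ha : v a ≤ 1) (hb : v b ≤ 1) (hc : v c ≤ 1) (hd : v d ≤ 1)
    (hdet : v (a * d - b * c) = 1) (s t : K) (hs : v s ≤ 1) (ht : v t ≤ 1)
    (h : v s = 1 ∨ v t = 1) :
    v (a * s + b * t) ≤ 1 ∧ v (c * s + d * t) ≤ 1 ∧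
      (v (a * s + b * t) = 1 ∨ v (c * s + d * t) = 1) := by
  have h1 : v (a * s + b * t) ≤ 1 := add_le_one' v hna (mul_le_one' v ha hs) (mul_le_one' v hb ht)
  have h2 : v (c * s + d * t) ≤ 1 := add_le_one' v hna (mul_le_one' v hc hs) (mul_le_one' v hd ht)
  refine ⟨h1, h2, ?_⟩
  by_contra hh
  push Not at hh
  have h1' := lt_of_le_of_ne h1 hh.1
  have h2' := lt_of_le_of_ne h2 hh.2
  have e1 : v ((a * d - b * c) * s) < 1 := by
    have : (a * d - b * c) * s = d * (a * s + b * t) - b * (c * s + d * t) := by ring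
    rw [this]
    exact sub_lt_one' v hna (mul_lt_right v hd h1') (mul_lt_right v hb h2')
  have e2 : v ((a * d - b * c) * t) < 1 := by
    have : (a * d - b * c) * t = a * (c * s + d * t) - c * (a * s + b * t) := by ring
    rw [this]
    exact sub_lt_one' v hna (mul_lt_right v ha h2') (mul_lt_right v hc h1')
  rw [map_mul, hdet, one_mul] at e1 e2
  rcases h with h | h <;> linarith

theorem mem_lifts_iff' (hna : IsNonarchimedean (⇑v)) (p : Polynomial K) :
    p ∈ Polynomial.lifts (vints v hna).subtype ↔ ∀ i, v (p.coeff i) ≤ 1 := by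
  rw [lifts_iff_coeff_lifts]
  refine forall_congr' fun i => ?_
  constructor
  · rintro ⟨y, hy⟩
    rw [← hy]
    exact y.2
  · intro h
    exact ⟨⟨p.coeff i, h⟩, rfl⟩

theorem C_lifts (hna : IsNonarchimedean (⇑v)) (a : K) (ha : v a ≤ 1) : C a ∈ Polynomial.lifts (vints v hna).subtype :=
  C'_mem_lifts ⟨⟨a, ha⟩, rfl⟩

theorem pol_int (hna : IsNonarchimedean (⇑v)) (n : ℕ) (p : Polynomial K) (hp : ∀ i, v (p.coeff i) ≤ 1) (a b c d : K)
    (ha : v a ≤ 1) (hb : v b ≤ 1) (hc : v c ≤ 1) (hd : v d ≤ 1) :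
    pol n p (C a * X + C b) (C c * X + C d) ∈ Polynomial.lifts (vints v hna).subtype := by
  refine sum_mem fun i _ => mul_mem (mul_mem (C_lifts v hna _ (hp i)) (pow_mem ?_ _)) (pow_mem ?_ _)
  · exact add_mem (mul_mem (C_lifts v hna _ ha) (X_mem_lifts _)) (C_lifts v hna _ hb)
  · exact add_mem (mul_mem (C_lifts v hna _ hc) (X_mem_lifts _)) (C_lifts v hna _ hd)

theorem GR.conj (hna : IsNonarchimedean (⇑v)) {n : ℕ} {p q : Polynomial K} (h : GR v n p q) (a b c d : K)
    (ha : v a ≤ 1) (hb : v b ≤ 1) (hc : v c ≤ 1) (hd : v d ≤ 1)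
    (hdet : v (a * d - b * c) = 1) :
    ∃ p' q', GR v n p' q' ∧ rmap p' q' ∘ mob a b c d = mob a b c d ∘ rmap p q := by
  have hb' : v (-b) ≤ 1 := by simpa using hb
  have hc' : v (-c) ≤ 1 := by simpa using hc
  have hD : a * d - b * c ≠ 0 := by intro h0; simp [h0] at hdet
  let P := pol n p (C d * X + C (-b)) (C (-c) * X + C a)
  let Q := pol n q (C d * X + C (-b)) (C (-c) * X + C a)
  have hP := pol_int v hna n p h.ip d (-b) (-c) a hd hb' hc' ha
  have hQ := pol_int v hna n q h.iq d (-b) (-c) a hd hb' hc' ha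
  have dP : P.natDegree ≤ n := pol_deg n p d (-b) (-c) a
  have dQ : Q.natDegree ≤ n := pol_deg n q d (-b) (-c) a
  have hh1 : ∀ α β s t, hom n (C α * P + C β * Q) s t =
      α * hom n p (d * s + -b * t) (-c * s + a * t)
      + β * hom n q (d * s + -b * t) (-c * s + a * t) := by
    intro α β s t
    rw [hom_add, hom_pol, hom_pol]
  have hG : GR v n (C a * P + C b * Q) (C c * P + C d * Q) := by
    refine ⟨h.pos, ?_, ?_, ?_, ?_, ?_⟩
    · exact natDegree_add_le_of_degree_le ((natDegree_C_mul_le _ _).trans dP)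
        ((natDegree_C_mul_le _ _).trans dQ)
    · exact natDegree_add_le_of_degree_le ((natDegree_C_mul_le _ _).trans dP)
        ((natDegree_C_mul_le _ _).trans dQ)
    · rw [← mem_lifts_iff' v hna]
      exact add_mem (mul_mem (C_lifts v hna _ ha) hP) (mul_mem (C_lifts v hna _ hb) hQ)
    · rw [← mem_lifts_iff' v hna]
      exact add_mem (mul_mem (C_lifts v hna _ hc) hP) (mul_mem (C_lifts v hna _ hd) hQ)
    · intro s t hs ht hst
      rw [hh1, hh1]
      obtain ⟨e1, e2, e3⟩ := lin_prim v hna d (-b) (-c) a hd hb' hc' ha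
        (by rw [← hdet]; congr 1; ring) s t hs ht hst
      exact (lin_prim v hna a b c d ha hb hc hd hdet _ _ (hom_le v hna n p h.ip e1 e2)
        (hom_le v hna n q h.iq e1 e2) (h.prim _ _ e1 e2 e3)).2.2
  refine ⟨_, _, hG, ?_⟩
  funext R
  obtain ⟨s, t, hst, rfl⟩ := pt_exists R
  rw [Function.comp_apply, Function.comp_apply, mob_pt _ _ _ _ hD s t hst,
    hG.rmap_pt _ _ (lin_ne _ _ _ _ hD s t hst), h.rmap_pt s t hst,
    mob_pt _ _ _ _ hD _ _ (h.ne s t hst), hh1, hh1,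
    ← pt_smul ((a * d - b * c) ^ n) (a * hom n p s t + b * hom n q s t)
      (c * hom n p s t + d * hom n q s t) (pow_ne_zero n hD)]
  have e1 : d * (a * s + b * t) + -b * (c * s + d * t) = (a * d - b * c) * s := by ring
  have e2 : -c * (a * s + b * t) + a * (c * s + d * t) = (a * d - b * c) * t := by ring
  rw [e1, e2, hom_smul, hom_smul]
  congr 1 <;> ring

end val

section red

variable {K : Type*} [Field K] (v : AbsoluteValue K ℝ) (hna : IsNonarchimedean (⇑v))

theorem mk_eq_zero (z : vints v hna) :
    Ideal.Quotient.mk (vmax v hna) z = 0 ↔ v (z : K) < 1 := by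
  rw [Ideal.Quotient.eq_zero_iff_mem]
  rfl

theorem vmax_maximal : (vmax v hna).IsMaximal := by
  rw [Ideal.isMaximal_iff]
  constructor
  · intro h
    have : v ((1 : vints v hna) : K) < 1 := h
    simp at this
  · intro J z hJ hz hzJ
    have hz1 : v (z : K) = 1 := le_antisymm z.2 (not_lt.1 hz)
    have hz0 : (z : K) ≠ 0 := by intro h0; simp [h0] at hz1
    have hw : v ((z : K)⁻¹) ≤ 1 := by rw [map_inv₀, hz1]; simp
    have := J.mul_mem_left (⟨(z : K)⁻¹, hw⟩ : vints v hna) hzJ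
    convert this
    apply Subtype.ext
    simp [hz0]

theorem coeff_liftp (F : Polynomial (vints v hna)) (i : ℕ) :
    (liftp v hna F).coeff i = (F.coeff i : K) := by
  simp [liftp]

theorem eval_liftp_s15 (F : Polynomial (vints v hna)) (z : vints v hna) :
    (liftp v hna F).eval (z : K) = ((F.eval z : vints v hna) : K) := by
  have := Polynomial.eval_map_apply (p := F) (f := (vints v hna).subtype) z
  simpa [liftp] using this

theorem eval_redp (F : Polynomial (vints v hna)) (z : vints v hna) :
    (redp v hna F).eval (Ideal.Quotient.mk (vmax v hna) z) = 0 ↔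
      v ((liftp v hna F).eval (z : K)) < 1 := by
  rw [eval_liftp_s15, ← mk_eq_zero, redp, Polynomial.eval_map_apply]

theorem coeff_redp (F : Polynomial (vints v hna)) (i : ℕ) :
    (redp v hna F).coeff i = 0 ↔ v ((liftp v hna F).coeff i) < 1 := by
  rw [coeff_liftp, ← mk_eq_zero, redp, coeff_map]

theorem natDegree_liftp (F : Polynomial (vints v hna)) :
    (liftp v hna F).natDegree = F.natDegree :=
  natDegree_map_eq_of_injective Subtype.val_injective F

theorem GR_of_good (F G : Polynomial (vints v hna)) (hn : 1 ≤ max F.natDegree G.natDegree)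
    (h : GoodRed v hna F G) :
    GR v (max F.natDegree G.natDegree) (liftp v hna F) (liftp v hna G) := by
  haveI := vmax_maximal v hna
  haveI : Nontrivial ((vints v hna) ⧸ (vmax v hna)) :=
    Ideal.Quotient.nontrivial_iff.2 this.ne_top
  have dF : (liftp v hna F).natDegree ≤ max F.natDegree G.natDegree := by
    rw [natDegree_liftp]; exact le_max_left _ _
  have dG : (liftp v hna G).natDegree ≤ max F.natDegree G.natDegree := by
    rw [natDegree_liftp]; exact le_max_right _ _
  have iF : ∀ i, v ((liftp v hna F).coeff i) ≤ 1 := fun i => by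
    rw [coeff_liftp]; exact (F.coeff i).2
  have iG : ∀ i, v ((liftp v hna G).coeff i) ≤ 1 := fun i => by
    rw [coeff_liftp]; exact (G.coeff i).2
  refine ⟨hn, dF, dG, iF, iG, ?_⟩
  obtain ⟨hc, hd⟩ := h
  generalize hN : max F.natDegree G.natDegree = n at *
  intro s t hs ht hst
  by_contra hh
  push Not at hh
  have h1 := lt_of_le_of_ne (hom_le v hna n _ iF hs ht) hh.1
  have h2 := lt_of_le_of_ne (hom_le v hna n _ iG hs ht) hh.2
  by_cases ht1 : v t = 1
  · have ht0 : t ≠ 0 := by rintro rfl; simp at ht1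
    rw [hom_ne n _ dF s t ht0, map_mul, map_pow, ht1, one_pow, one_mul] at h1
    rw [hom_ne n _ dG s t ht0, map_mul, map_pow, ht1, one_pow, one_mul] at h2
    let z : vints v hna := ⟨s / t, by show v (s / t) ≤ 1; rw [map_div₀, ht1]; simpa using hs⟩
    have e1 := (eval_redp v hna F z).2 h1
    have e2 := (eval_redp v hna G z).2 h2
    obtain ⟨α, β, hab⟩ := hc
    have := congrArg (Polynomial.eval (Ideal.Quotient.mk (vmax v hna) z)) hab
    rw [eval_add, eval_mul, eval_mul, e1, e2] at this
    simp at this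
  · have hs1 : v s = 1 := by tauto
    have ht' := lt_of_le_of_ne ht ht1
    have k1 := hom_lt v hna n _ iF hs ht hs (t' := 0) (by simp) (by simp) (by simpa using ht') h1
    have k2 := hom_lt v hna n _ iG hs ht hs (t' := 0) (by simp) (by simp) (by simpa using ht') h2
    rw [hom_zero_right, map_mul, map_pow, hs1, one_pow, mul_one, ← coeff_redp] at k1 k2
    rcases max_choice (redp v hna F).natDegree (redp v hna G).natDegree with hm | hm
    · rw [hm] at hd
      rw [← hd, coeff_natDegree, leadingCoeff_eq_zero] at k1
      rw [k1] at hd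
      simp at hd
      omega
    · rw [hm] at hd
      rw [← hd, coeff_natDegree, leadingCoeff_eq_zero] at k2
      rw [k2] at hd
      simp at hd
      omega

theorem root_int (hna : IsNonarchimedean (⇑v)) (q : Polynomial K) (hq : q.Monic) (hi : ∀ i, v (q.coeff i) ≤ 1) (z : K)
    (hz : q.eval z = 0) : v z ≤ 1 := by
  by_contra hz1
  have hz1 : 1 < v z := not_le.1 hz1
  have hz0 : z ≠ 0 := by rintro rfl; simp at hz1; linarith
  have e : hom q.natDegree q 1 z⁻¹ = 0 := by
    rw [hom_ne _ q le_rfl _ _ (inv_ne_zero hz0)]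
    simp [hz]
  have hlt : v z⁻¹ < 1 := by rw [map_inv₀]; exact inv_lt_one_of_one_lt₀ hz1
  have := hom_lt v hna q.natDegree q hi (s := 1) (s' := 1) (t := z⁻¹) (t' := 0) (by simp) hlt.le
    (by simp) (by simp) (by simp) (by simpa using hlt) (by rw [e]; simp)
  rw [hom_zero_right] at this
  simp [hq.leadingCoeff] at this

theorem good_of_GR [IsAlgClosed K] (n : ℕ) (p q : Polynomial K) (h : GR v n p q) :
    ∃ F G : Polynomial (vints v hna), GoodRep v hna F G ∧ GoodRed v hna F G ∧
      liftp v hna F = p ∧ liftp v hna G = q := by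
  obtain ⟨F, hF⟩ := (mem_lifts p).1 ((mem_lifts_iff' v hna p).2 h.ip)
  obtain ⟨G, hG⟩ := (mem_lifts q).1 ((mem_lifts_iff' v hna q).2 h.iq)
  change liftp v hna F = p at hF
  change liftp v hna G = q at hG
  refine ⟨F, G, ⟨?_, n, ?_⟩, ⟨?_, ?_⟩, hF, hG⟩
  · rw [hF, hG, isCoprime_iff_aeval_ne_zero_of_isAlgClosed K K]
    intro z
    have := h.ne z 1 (by simp)
    rw [hom_one n p h.dp, hom_one n q h.dq] at this
    simpa using this
  · have := h.coeff
    rwa [← hF, ← hG, coeff_liftp, coeff_liftp] at this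
  · haveI := vmax_maximal v hna
    letI : Field ((vints v hna) ⧸ (vmax v hna)) := Ideal.Quotient.field (vmax v hna)
    haveI : IsAlgClosed ((vints v hna) ⧸ (vmax v hna)) := by
      refine IsAlgClosed.of_exists_root _ fun r hr hirr => ?_
      obtain ⟨R, hR, hdeg, hmon⟩ := lifts_and_degree_eq_and_monic
        (mem_lifts_of_surjective (f := Ideal.Quotient.mk (vmax v hna))
          Ideal.Quotient.mk_surjective r) hr
      have hm : (liftp v hna R).Monic := hmon.map _
      obtain ⟨z, hz⟩ := IsAlgClosed.exists_root (liftp v hna R) (by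
        rw [liftp, degree_map_eq_of_injective Subtype.val_injective, hdeg]
        exact hirr.degree_pos.ne')
      have hz1 : v z ≤ 1 := root_int v hna _ hm
        (fun i => by rw [coeff_liftp]; exact (R.coeff i).2) z hz
      refine ⟨Ideal.Quotient.mk (vmax v hna) ⟨z, hz1⟩, ?_⟩
      have := (eval_redp v hna R ⟨z, hz1⟩).2 (by
        rw [show (liftp v hna R).eval z = 0 from hz]; simp)
      rw [← hR]
      exact this
    have key : ∀ w, eval w (redp v hna F) ≠ 0 ∨ eval w (redp v hna G) ≠ 0 := by
      intro w
      obtain ⟨z, rfl⟩ := Ideal.Quotient.mk_surjective w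
      rw [Ne, Ne, eval_redp, eval_redp, hF, hG, ← hom_one n p h.dp, ← hom_one n q h.dq]
      rcases h.prim z 1 z.2 (by simp) (by simp) with h | h
      · left; linarith
      · right; linarith
    exact (isCoprime_iff_aeval_ne_zero_of_isAlgClosed
      ((vints v hna) ⧸ (vmax v hna)) ((vints v hna) ⧸ (vmax v hna)) (redp v hna F) (redp v hna G)).2 key
  · have d1 : (redp v hna F).natDegree ≤ F.natDegree := natDegree_map_le
    have d2 : (redp v hna G).natDegree ≤ G.natDegree := natDegree_map_le
    have d3 : F.natDegree ≤ n := by rw [← natDegree_liftp, hF]; exact h.dp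
    have d4 : G.natDegree ≤ n := by rw [← natDegree_liftp, hG]; exact h.dq
    have d5 : n ≤ max (redp v hna F).natDegree (redp v hna G).natDegree := by
      rw [le_max_iff]
      rcases h.coeff with h | h
      · left
        apply le_natDegree_of_ne_zero
        rw [Ne, coeff_redp, hF, h]
        simp
      · right
        apply le_natDegree_of_ne_zero
        rw [Ne, coeff_redp, hG, h]
        simp
    exact le_antisymm (max_le_max d1 d2) ((max_le d3 d4).trans d5)

/-- Comparison of multipliers under conjugation, with the fixed point moved to `0`. -/
theorem mult_eq [Infinite K] (n : ℕ) (p q : Polynomial K) (h : GR v n p q) (f g : Polynomial K)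
    (x : K) (hgx : g.eval x ≠ 0) (hfx : f.eval x = x * g.eval x) (hg : p.coeff 0 = 0)
    (a b c d : K) (hdet : a * d - b * c ≠ 0) (hx : a * x + b = 0)
    (hnz : ∀ z, f.eval z ≠ 0 ∨ g.eval z ≠ 0)
    (hconj : rmap p q ∘ mob a b c d = mob a b c d ∘ rmap f g) :
    p.coeff 1 * g.eval x = q.coeff 0 * (derivative f - C x * derivative g).eval x := by
  obtain ⟨m, rfl⟩ : ∃ m, n = m + 1 := ⟨n - 1, by have := h.pos; omega⟩
  have ha : a ≠ 0 := by
    rintro rfl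
    apply hdet
    have : b = 0 := by linear_combination hx
    simp [this]
  have hb : b = -a * x := by linear_combination hx
  set A : Polynomial K := C a * X + C b with hA
  set B : Polynomial K := C c * X + C d with hB
  have id1 : pol (m + 1) p A B * (C c * f + C d * g) = (C a * f + C b * g) * pol (m + 1) q A B := by
    refine Polynomial.funext fun z => ?_
    have := congrFun hconj (some z)
    simp only [Function.comp_apply] at this
    rw [rmap_some, mob_pt _ _ _ _ hdet _ _ (hnz z), some_eq_pt z,
      mob_pt _ _ _ _ hdet _ _ (by simp), h.rmap_pt _ _ (lin_ne _ _ _ _ hdet _ _ (by simp))] at this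
    have := pt_cross this
    simp only [eval_mul, eval_add, eval_C, eval_pol, hA, hB, eval_X]
    simpa using this
  let Q : Polynomial K := ∑ i ∈ Finset.range (m + 1), C (p.coeff (i + 1)) * A ^ i * B ^ (m - i)
  have id2 : pol (m + 1) p A B = A * Q := by
    unfold pol
    rw [Finset.sum_range_succ', hg, Finset.mul_sum]
    simp only [map_zero, zero_mul, add_zero]
    refine Finset.sum_congr rfl fun i _ => ?_
    rw [Nat.add_sub_add_right]
    ring
  have hAx : A.eval x = 0 := by simp [hA, hx]
  have hQx : Q.eval x = p.coeff 1 * (c * x + d) ^ m := by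
    simp only [Q, eval_finsetSum, eval_mul, eval_pow, eval_C, hAx]
    rw [Finset.sum_range_succ', Finset.sum_eq_zero]
    · simp [hB]
    · intro i _; simp
  have hqx : (pol (m + 1) q A B).eval x = q.coeff 0 * (c * x + d) ^ (m + 1) := by
    rw [eval_pol, hAx, hom_zero_left]
    simp [hB]
  have hT : c * x + d ≠ 0 := by
    rcases lin_ne a b c d hdet x 1 (by simp) with h | h
    · simp [hx] at h
    · simpa using h
  have id3 : (X - C x) * (Q * (C c * f + C d * g)) = (f - C x * g) * pol (m + 1) q A B := by
    have hCa : C a ≠ 0 := by simpa using ha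
    apply mul_left_cancel₀ hCa
    rw [id2] at id1
    have e1 : A = C a * (X - C x) := by rw [hA, hb]; simp; ring
    have e2 : C a * f + C b * g = C a * (f - C x * g) := by rw [hb]; simp; ring
    rw [e2] at id1
    calc C a * ((X - C x) * (Q * (C c * f + C d * g)))
        = A * Q * (C c * f + C d * g) := by rw [e1]; ring
      _ = _ := by rw [id1]; ring
  have id4 := congrArg (fun r => (derivative r).eval x) id3
  simp [hfx, hQx, hqx] at id4
  have : (c * x + d) ^ (m + 1) * (p.coeff 1 * g.eval x)
      = (c * x + d) ^ (m + 1) * (q.coeff 0 * (derivative f - C x * derivative g).eval x) := by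
    simp only [eval_sub, eval_mul, eval_C]
    linear_combination id4
  exact mul_left_cancel₀ (pow_ne_zero _ hT) this

end red

section core

variable {K : Type*} [Field K] (v : AbsoluteValue K ℝ)

theorem conj_step (hna : IsNonarchimedean (⇑v)) (n : ℕ) (p q f g : Polynomial K) (h : GR v n p q)
    (a' b' c' d' : K) (hdet' : a' * d' - b' * c' ≠ 0)
    (hconj : rmap p q ∘ mob a' b' c' d' = mob a' b' c' d' ∘ rmap f g)
    (a b c d : K) (ha : v a ≤ 1) (hb : v b ≤ 1) (hc : v c ≤ 1) (hd : v d ≤ 1)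
    (hdet : v (a * d - b * c) = 1) :
    ∃ p₂ q₂ : Polynomial K, ∃ a₂ b₂ c₂ d₂ : K, GR v n p₂ q₂ ∧ a₂ * d₂ - b₂ * c₂ ≠ 0 ∧
      mob a₂ b₂ c₂ d₂ = mob a b c d ∘ mob a' b' c' d' ∧
      rmap p₂ q₂ ∘ mob a₂ b₂ c₂ d₂ = mob a₂ b₂ c₂ d₂ ∘ rmap f g := by
  have hD : a * d - b * c ≠ 0 := by intro h0; simp [h0] at hdet
  obtain ⟨p₂, q₂, hG, hc2⟩ := h.conj v hna a b c d ha hb hc hd hdet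
  refine ⟨p₂, q₂, a * a' + b * c', a * b' + b * d', c * a' + d * c', c * b' + d * d', hG, ?_, ?_, ?_⟩
  · intro hh
    apply mul_ne_zero hD hdet'
    linear_combination hh
  · exact mob_comp _ _ _ _ _ _ _ _ hD hdet'
  · rw [mob_comp _ _ _ _ _ _ _ _ hD hdet', ← Function.comp_assoc, hc2, Function.comp_assoc, hconj,
      Function.comp_assoc]

theorem core (hna : IsNonarchimedean (⇑v)) [Infinite K] (n : ℕ) (p q f g : Polynomial K) (h : GR v n p q)
    (hcop : IsCoprime f g)
    (x : K) (hfix : rmap f g (some x) = some x)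
    (hind : v (multiplier f g (some x)) = 1)
    (y₁ : K) (hy₁ : rmap f g (some y₁) = some x) (hne : y₁ ≠ x)
    (y₂ : Option K) (hy₂ : rmap f g y₂ = some y₁)
    (a b c d : K) (hdet : a * d - b * c ≠ 0)
    (h0 : mob a b c d (some x) = some 0) (h1 : mob a b c d (some y₁) = some 1)
    (hinf : mob a b c d y₂ = none)
    (a' b' c' d' : K) (hdet' : a' * d' - b' * c' ≠ 0) (h0' : mob a' b' c' d' (some x) = some 0)
    (hconj : rmap p q ∘ mob a' b' c' d' = mob a' b' c' d' ∘ rmap f g) :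
    ∃ p₂ q₂ : Polynomial K, GR v n p₂ q₂ ∧
      rmap p₂ q₂ ∘ mob a b c d = mob a b c d ∘ rmap f g := by
  -- fixed point data
  obtain ⟨hgx, hfx⟩ := pt_eq_some ((rmap_some f g x).symm.trans hfix)
  obtain ⟨-, hx'⟩ := mob_some_iff _ _ _ _ hdet' _ _ h0'
  rw [zero_mul] at hx'
  have hnz : ∀ z, f.eval z ≠ 0 ∨ g.eval z ≠ 0 := by
    intro z
    by_contra hh
    push Not at hh
    obtain ⟨α, β, hab⟩ := hcop
    have := congrArg (Polynomial.eval z) hab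
    simp [hh.1, hh.2] at this
  have hp0 : p.coeff 0 = 0 := by
    have := congrFun hconj (some x)
    simp only [Function.comp_apply, hfix, h0'] at this
    rw [some_eq_pt, h.rmap_pt _ _ (by simp), hom_zero_left, hom_zero_left] at this
    simpa using pt_cross this
  have hq0 : v (q.coeff 0) = 1 := by
    have := h.prim 0 1 (by simp) (by simp) (by simp)
    simpa [hom_zero_left, hp0] using this
  have hmul := mult_eq v n p q h f g x hgx hfx hp0 a' b' c' d' hdet' hx' hnz hconj
  have hp1 : v (p.coeff 1) = 1 := by
    have e : multiplier f g (some x) = (derivative f - C x * derivative g).eval x / g.eval x := by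
      simp only [multiplier, eval_sub, eval_mul, eval_C, hfx]
      field_simp
    rw [e, map_div₀] at hind
    have hg0 : v (g.eval x) ≠ 0 := by simpa using hgx
    have hh := (div_eq_one_iff_eq hg0).1 hind
    have := congrArg v hmul
    rw [map_mul, map_mul, hq0, one_mul, hh] at this
    exact mul_right_cancel₀ hg0 (by rw [this, one_mul])
  -- the image of `y₁`
  obtain ⟨s₁, t₁, hs₁, ht₁, hst₁, hnz₁, hY₁⟩ := pt_prim v (mob a' b' c' d' (some y₁))
  have hFY : hom n p s₁ t₁ = 0 := by
    have := congrFun hconj (some y₁)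
    simp only [Function.comp_apply, hy₁, h0', hY₁] at this
    rw [h.rmap_pt _ _ hnz₁, some_eq_pt] at this
    simpa using pt_cross this
  have hs₁0 : s₁ ≠ 0 := by
    intro hs0
    apply hne
    have : mob a' b' c' d' (some y₁) = mob a' b' c' d' (some x) := by
      rw [hY₁, h0', hs0]
      have : t₁ ≠ 0 := by simpa [hs0] using hnz₁
      simp [pt, this]
    simpa using mob_inj _ _ _ _ hdet' this
  have hs₁1 : v s₁ = 1 := by
    by_contra hs
    have hlt := lt_of_le_of_ne hs₁ hs
    have ht1 : v t₁ = 1 := by tauto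
    obtain ⟨m, rfl⟩ : ∃ m, n = m + 1 := ⟨n - 1, by have := h.pos; omega⟩
    unfold hom at hFY
    rw [Finset.sum_range_succ', hp0] at hFY
    rw [Finset.sum_range_succ'] at hFY
    simp only [zero_mul, add_zero, zero_add, pow_one, Nat.add_sub_cancel] at hFY
    have e : s₁ * (p.coeff 1 * t₁ ^ m) = s₁ * (-(∑ k ∈ Finset.range m,
        p.coeff (k + 1 + 1) * s₁ ^ k * t₁ ^ (m + 1 - (k + 1 + 1)) * s₁)) := by
      have e2 : s₁ * (∑ k ∈ Finset.range m,
        p.coeff (k + 1 + 1) * s₁ ^ k * t₁ ^ (m + 1 - (k + 1 + 1)) * s₁) = ∑ k ∈ Finset.range m,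
        p.coeff (k + 1 + 1) * s₁ ^ (k + 1 + 1) * t₁ ^ (m + 1 - (k + 1 + 1)) := by
        rw [Finset.mul_sum]
        exact Finset.sum_congr rfl fun i _ => by ring
      rw [mul_neg, e2]
      linear_combination hFY
    have e' := congrArg v (mul_left_cancel₀ hs₁0 e)
    rw [map_mul, map_pow, ht1, hp1, map_neg_eq_map] at e'
    have : v (∑ k ∈ Finset.range m,
        p.coeff (k + 1 + 1) * s₁ ^ k * t₁ ^ (m + 1 - (k + 1 + 1)) * s₁) < 1 := by
      refine sum_lt v hna _ _ fun i _ => mul_lt_right v ?_ hlt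
      exact mul_le_one' v (mul_le_one' v (h.ip _) (pow_le_one' v hs₁ _)) (pow_le_one' v ht₁ _)
    rw [← e'] at this
    simp at this
  -- the image of `y₂`
  obtain ⟨s₂, t₂, hs₂, ht₂, hst₂, hnz₂, hY₂⟩ := pt_prim v (mob a' b' c' d' y₂)
  have hcross : hom n p s₂ t₂ * t₁ = s₁ * hom n q s₂ t₂ := by
    have := congrFun hconj y₂
    simp only [Function.comp_apply, hy₂, hY₁, hY₂] at this
    rw [h.rmap_pt _ _ hnz₂] at this
    exact pt_cross this
  have hF2 : v (hom n p s₂ t₂) = 1 := by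
    rcases h.prim s₂ t₂ hs₂ ht₂ hst₂ with hh | hh
    · exact hh
    · have := congrArg v hcross
      rw [map_mul, map_mul, hh, hs₁1] at this
      have h3 := hom_le v hna n p h.ip hs₂ ht₂
      nlinarith [v.nonneg (hom n p s₂ t₂), v.nonneg t₁]
  have hs₂1 : v s₂ = 1 := by
    by_contra hs
    have hlt := lt_of_le_of_ne hs₂ hs
    have := hom_lt v hna n p h.ip (s := 0) (t := t₂) (by simp) ht₂ hs₂ ht₂ (by simpa using hlt)
      (by simp) (by rw [hom_zero_left, hp0]; simp)
    linarith
  have hΔ : v (s₁ * t₂ - s₂ * t₁) = 1 := by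
    have hle : v (s₁ * t₂ - s₂ * t₁) ≤ 1 := by
      rw [sub_eq_add_neg]
      exact add_le_one' v hna (mul_le_one' v hs₁ ht₂)
        (by rw [map_neg_eq_map]; exact mul_le_one' v hs₂ ht₁)
    by_contra hs
    have hlt := lt_of_le_of_ne hle hs
    have e0 : hom n p (s₂ * s₁) (s₂ * t₁) = 0 := by rw [hom_smul, hFY, mul_zero]
    have := hom_lt v hna n p h.ip (s := s₂ * s₁) (t := s₂ * t₁) (s' := s₁ * s₂) (t' := s₁ * t₂)
      (mul_le_one' v hs₂ hs₁) (mul_le_one' v hs₂ ht₁) (mul_le_one' v hs₁ hs₂)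
      (mul_le_one' v hs₁ ht₂) (by rw [mul_comm]; simp) (by rw [v.map_sub]; exact hlt)
      (by rw [e0]; simp)
    rw [hom_smul, map_mul, map_pow, hs₁1, one_pow, one_mul, hF2] at this
    exact lt_irrefl _ this
  -- the integral change of coordinates
  have hα : v ((s₁ * t₂ - s₂ * t₁) / s₁) = 1 := by rw [map_div₀, hΔ, hs₁1]; simp
  have hs₂0 : s₂ ≠ 0 := by rintro rfl; simp at hs₂1
  have hΔ0 : s₁ * t₂ - s₂ * t₁ ≠ 0 := by intro h0; simp [h0] at hΔ
  have hα0 : (s₁ * t₂ - s₂ * t₁) / s₁ ≠ 0 := div_ne_zero hΔ0 hs₁0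
  have hND : (s₁ * t₂ - s₂ * t₁) / s₁ * (-s₂) - 0 * t₂ ≠ 0 := by
    simp only [zero_mul, sub_zero]
    exact mul_ne_zero hα0 (neg_ne_zero.2 hs₂0)
  obtain ⟨p₂, q₂, a₂, b₂, c₂, d₂, hG, hdet₂, hcomp, hfin⟩ :=
    conj_step v hna n p q f g h a' b' c' d' hdet' hconj
      ((s₁ * t₂ - s₂ * t₁) / s₁) 0 t₂ (-s₂) hα.le (by simp) ht₂ (by simpa using hs₂)
      (by rw [zero_mul, sub_zero, map_mul, hα, map_neg_eq_map, hs₂1, one_mul])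
  refine ⟨p₂, q₂, hG, ?_⟩
  have hEq : mob a b c d = mob a₂ b₂ c₂ d₂ := by
    refine mob_unique x y₁ hne y₂ a b c d a₂ b₂ c₂ d₂ hdet hdet₂ h0 h1 hinf ?_ ?_ ?_
    · rw [hcomp, Function.comp_apply, h0', some_eq_pt, mob_pt _ _ _ _ hND _ _ (by simp)]
      simp [pt, hs₂0]
    · rw [hcomp, Function.comp_apply, hY₁, mob_pt _ _ _ _ hND _ _ hnz₁]
      have e : t₂ * s₁ + -s₂ * t₁ = s₁ * t₂ - s₂ * t₁ := by ring
      rw [e]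
      simp only [pt, hΔ0, if_false]
      congr 1
      field_simp
      ring
    · rw [hcomp, Function.comp_apply, hY₂, mob_pt _ _ _ _ hND _ _ hnz₂]
      have e : t₂ * s₂ + -s₂ * t₂ = 0 := by ring
      rw [e]
      simp [pt]
  rw [hEq]
  exact hfin

end core

/-- Theorem, Case 1: let `φ = f/g` have degree `d ≥ 2` with an indifferent
fixed point `x`, let `y₁ ≠ x` be a preimage of `x`, `y₂ ∈ P¹(K)` a preimage of `y₁`, and let
`h` be the Möbius transformation with `h(x) = 0`, `h(y₁) = 1`, `h(y₂) = ∞`.  Then `φ` has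
potentially good reduction if and only if `ψ = h ∘ φ ∘ h⁻¹` has good reduction. -/
theorem pot_good_reduction_iff_indifferent_case {K : Type*} [Field K] [IsAlgClosed K]
    (v : AbsoluteValue K ℝ) (hna : IsNonarchimedean (⇑v))
    (f g : Polynomial K) (hcop : IsCoprime f g)
    (hdeg : 2 ≤ max f.natDegree g.natDegree)
    (x : K) (hfix : rmap f g (some x) = some x)
    (hind : v (multiplier f g (some x)) = 1)
    (y₁ : K) (hy₁ : rmap f g (some y₁) = some x) (hne : y₁ ≠ x)
    (y₂ : Option K) (hy₂ : rmap f g y₂ = some y₁)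
    (a b c d : K) (hdet : a * d - b * c ≠ 0)
    (h0 : mob a b c d (some x) = some 0) (h1 : mob a b c d (some y₁) = some 1)
    (hinf : mob a b c d y₂ = none) :
    PotGoodRed v hna f g ↔
      ∃ F G : Polynomial (vints v hna), GoodRep v hna F G ∧ GoodRed v hna F G ∧
        rmap (liftp v hna F) (liftp v hna G) ∘ mob a b c d = mob a b c d ∘ rmap f g := by
  constructor
  swap
  · rintro ⟨F, G, hr, hg, hc⟩
    exact ⟨a, b, c, d, hdet, F, G, hr, hg, hc⟩
  · rintro ⟨a', b', c', d', hdet', F, G, hr, hg, hc⟩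
    have hinfinite : Infinite K := IsAlgClosed.instInfinite
    have c0 := congrFun hc (some x)
    have c1 := congrFun hc (some y₁)
    have c2 := congrFun hc y₂
    simp only [Function.comp_apply, hfix, hy₁, hy₂] at c0 c1 c2
    have hn : 1 ≤ max F.natDegree G.natDegree := by
      by_contra hn
      have hF : F.natDegree = 0 := by omega
      have hG : G.natDegree = 0 := by omega
      rw [← natDegree_liftp] at hF hG
      obtain ⟨α, hα⟩ := natDegree_eq_zero.1 hF
      obtain ⟨β, hβ⟩ := natDegree_eq_zero.1 hG
      rw [← hα, ← hβ] at c0 c1 c2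
      by_cases hb : β = 0
      · subst hb
        cases hX : mob a' b' c' d' (some x) <;> simp [hX, rmap] at c0
      · have key : ∀ P, rmap (C α) (C β) P = some (α / β) := by
          intro P
          cases P <;> simp [rmap, hb]
        rw [key] at c1 c2
        have := mob_inj _ _ _ _ hdet' (c2.symm.trans c1)
        exact hne (by simpa using this)
    have hGR := GR_of_good v hna F G hn hg
    obtain ⟨s, t, hs, ht, hst, hnz, hX⟩ := pt_prim v (mob a' b' c' d' (some x))
    have step : ∃ p₂ q₂ : Polynomial K, ∃ a₂ b₂ c₂ d₂ : K,
        GR v (max F.natDegree G.natDegree) p₂ q₂ ∧ a₂ * d₂ - b₂ * c₂ ≠ 0 ∧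
        mob a₂ b₂ c₂ d₂ (some x) = some 0 ∧
        rmap p₂ q₂ ∘ mob a₂ b₂ c₂ d₂ = mob a₂ b₂ c₂ d₂ ∘ rmap f g := by
      have hs' : v (-s) ≤ 1 := by simpa using hs
      by_cases ht1 : v t = 1
      · obtain ⟨p₂, q₂, a₂, b₂, c₂, d₂, h1, h2, h3, h4⟩ :=
          conj_step v hna _ _ _ f g hGR a' b' c' d' hdet' hc t (-s) 0 1 ht hs' (by simp) (by simp)
            (by simpa using ht1)
        refine ⟨p₂, q₂, a₂, b₂, c₂, d₂, h1, h2, ?_, h4⟩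
        have ht0 : t ≠ 0 := by rintro rfl; simp at ht1
        rw [h3, Function.comp_apply, hX, mob_pt _ _ _ _ (by simpa using ht0) _ _ hnz]
        have e : t * s + -s * t = 0 := by ring
        rw [e]
        simp [pt, ht0]
      · have hs1 : v s = 1 := by tauto
        have hs0 : s ≠ 0 := by rintro rfl; simp at hs1
        obtain ⟨p₂, q₂, a₂, b₂, c₂, d₂, h1, h2, h3, h4⟩ :=
          conj_step v hna _ _ _ f g hGR a' b' c' d' hdet' hc t (-s) 1 0 ht hs' (by simp) (by simp)
            (by simpa using hs1)
        refine ⟨p₂, q₂, a₂, b₂, c₂, d₂, h1, h2, ?_, h4⟩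
        rw [h3, Function.comp_apply, hX, mob_pt _ _ _ _ (by simpa using hs0) _ _ hnz]
        have e : t * s + -s * t = 0 := by ring
        rw [e]
        simp [pt, hs0]
    obtain ⟨p₂, q₂, a₂, b₂, c₂, d₂, g1, g2, g3, g4⟩ := step
    obtain ⟨p₃, q₃, g5, g6⟩ := core v hna _ p₂ q₂ f g g1 hcop x hfix hind y₁ hy₁ hne y₂ hy₂
      a b c d hdet h0 h1 hinf a₂ b₂ c₂ d₂ g2 g3 g4
    obtain ⟨F', G', k1, k2, k3, k4⟩ := good_of_GR v hna _ p₃ q₃ g5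
    exact ⟨F', G', k1, k2, by rw [k3, k4]; exact g6⟩

end PaperPGR
end
end

section
/- Let φ ∈ K̄(z) be a rational function of degree d ≥ 2 all of whose fixed points in P¹(K̄) are attracting (every multiplier λ satisfies |λ|_v < 1, where the multiplier at a fixed point ∞ is defined as ψ'(0) for ψ(z) = 1/φ(1/z)). Then φ has d + 1 distinct fixed points; let x₁, x₂, x₃ be any three of them, let h be the unique Möbius transformation over K̄ with h(x₁) = 0, h(x₂) = 1, h(x₃) = ∞, and set ψ = h ∘ φ ∘ h⁻¹. Then φ has potentially good reduction if and only if ψ has good reduction. -/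
open Polynomial

noncomputable section

namespace PaperPGR

variable {K : Type*} [Field K]

open Finset in
/-- Homogeneous evaluation of `f` in degree `d` at `(x, y)`. -/
def hev {R A : Type*} [CommRing R] [CommRing A] [Algebra R A] (d : ℕ) (f : R[X]) (x y : A) : A :=
  ∑ i ∈ range (d + 1), algebraMap R A (f.coeff i) * x ^ i * y ^ (d - i)

section hevlemmas
variable {R A : Type*} [CommRing R] [CommRing A] [Algebra R A]

lemma hev_add (d : ℕ) (f g : R[X]) (x y : A) :
    hev d (f + g) x y = hev d f x y + hev d g x y := by
  simp [hev, add_mul, Finset.sum_add_distrib]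

lemma hev_zero (d : ℕ) (x y : A) : hev d (0 : R[X]) x y = 0 := by simp [hev]

lemma hev_C_mul (d : ℕ) (r : R) (f : R[X]) (x y : A) :
    hev d (C r * f) x y = algebraMap R A r * hev d f x y := by
  simp [hev, Finset.mul_sum, mul_assoc]

lemma hev_sum {ι : Type*} (d : ℕ) (s : Finset ι) (F : ι → R[X]) (x y : A) :
    hev d (∑ i ∈ s, F i) x y = ∑ i ∈ s, hev d (F i) x y := by
  classical
  induction s using Finset.induction_on with
  | empty => simp [hev_zero]
  | insert a s ha ih => rw [Finset.sum_insert ha, Finset.sum_insert ha, hev_add, ih]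

lemma hev_X_pow (d n : ℕ) (hn : n ≤ d) (x y : A) :
    hev d (X ^ n : R[X]) x y = x ^ n * y ^ (d - n) := by
  unfold hev
  rw [Finset.sum_eq_single n]
  · simp
  · intro b _ hb
    simp [coeff_X_pow, hb]
  · intro h
    simp at h
    omega

lemma hev_mul (m n : ℕ) (f g : R[X]) (hf : f.natDegree ≤ m) (hg : g.natDegree ≤ n) (x y : A) :
    hev (m + n) (f * g) x y = hev m f x y * hev n g x y := by
  rw [f.as_sum_range_C_mul_X_pow' (Nat.lt_succ_of_le hf),
    g.as_sum_range_C_mul_X_pow' (Nat.lt_succ_of_le hg), Finset.sum_mul_sum, hev_sum, hev_sum, hev_sum,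
    Finset.sum_mul_sum]
  refine Finset.sum_congr rfl fun i hi => ?_
  rw [hev_sum]
  refine Finset.sum_congr rfl fun j hj => ?_
  simp only [Finset.mem_range] at hi hj
  have e : (C (f.coeff i) * X ^ i * (C (g.coeff j) * X ^ j) : R[X]) =
    C (f.coeff i * g.coeff j) * X ^ (i + j) := by
    rw [C_mul, pow_add]; ring
  rw [e, hev_C_mul, hev_C_mul, hev_C_mul, hev_X_pow _ _ (by omega), hev_X_pow _ _ (by omega),
    hev_X_pow _ _ (by omega)]
  have : m + n - (i + j) = (m - i) + (n - j) := by omega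
  rw [this, map_mul]
  ring

lemma hev_pow (f : R[X]) (hf : f.natDegree ≤ 1) (n : ℕ) (x y : A) :
    hev n (f ^ n) x y = hev 1 f x y ^ n := by
  induction n with
  | zero => simp [hev]
  | succ n ih =>
    rw [pow_succ, hev_mul n 1 _ _ _ hf, ih, pow_succ]
    exact (natDegree_pow_le).trans (by nlinarith)

lemma hev_comp (d : ℕ) (f L M : R[X]) (hL : L.natDegree ≤ 1) (hM : M.natDegree ≤ 1) (x y : A) :
    hev d (hev d f L M) x y = hev d f (hev 1 L x y) (hev 1 M x y) := by
  conv_lhs => rw [hev.eq_def d f L M]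
  rw [hev_sum]
  conv_rhs => rw [hev]
  refine Finset.sum_congr rfl fun i hi => ?_
  simp only [Finset.mem_range] at hi
  rw [algebraMap_eq, mul_assoc, hev_C_mul]
  obtain ⟨j, rfl⟩ : ∃ j, d = i + j := ⟨d - i, by omega⟩
  simp only [Nat.add_sub_cancel_left]
  rw [hev_mul, hev_pow _ hL, hev_pow _ hM, mul_assoc]
  · exact (natDegree_pow_le).trans (by nlinarith)
  · exact (natDegree_pow_le).trans (by nlinarith)

lemma hev_one_right (d : ℕ) (f : R[X]) (hf : f.natDegree ≤ d) (x : A) :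
    hev d f x 1 = aeval x f := by
  rw [aeval_eq_sum_range' (Nat.lt_succ_of_le hf)]
  simp [hev, Algebra.smul_def]

lemma hev_y_zero (d : ℕ) (f : R[X]) (x : A) :
    hev d f x 0 = algebraMap R A (f.coeff d) * x ^ d := by
  unfold hev
  rw [Finset.sum_range_succ, Finset.sum_eq_zero]
  · simp
  · intro i hi
    simp only [Finset.mem_range] at hi
    rw [zero_pow (by omega), mul_zero]

lemma hev_smul (d : ℕ) (f : R[X]) (t x y : A) :
    hev d f (t * x) (t * y) = t ^ d * hev d f x y := by
  unfold hev
  rw [Finset.mul_sum]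
  refine Finset.sum_congr rfl fun i hi => ?_
  simp only [Finset.mem_range] at hi
  obtain ⟨j, rfl⟩ : ∃ j, d = i + j := ⟨d - i, by omega⟩
  simp only [Nat.add_sub_cancel_left]
  ring

lemma hev_natDegree_le (d : ℕ) (f L M : R[X]) (hL : L.natDegree ≤ 1) (hM : M.natDegree ≤ 1) :
    (hev d f L M).natDegree ≤ d := by
  unfold hev
  refine natDegree_sum_le_of_forall_le _ _ fun i hi => ?_
  simp only [Finset.mem_range] at hi
  have h1 : (L ^ i).natDegree ≤ i := (natDegree_pow_le).trans (by nlinarith)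
  have h2 : (M ^ (d - i)).natDegree ≤ d - i := (natDegree_pow_le).trans (by nlinarith)
  rw [algebraMap_eq, mul_assoc]
  refine (natDegree_C_mul_le _ _).trans (natDegree_mul_le.trans ?_)
  omega

lemma hev_map {S : Type*} [CommRing S] (σ : R →+* S) (d : ℕ) (f L M : R[X]) :
    (hev d f L M).map σ = hev d (f.map σ) (L.map σ) (M.map σ) := by
  simp [hev, Polynomial.map_sum]

lemma map_hev {S : Type*} [CommRing S] (σ : R →+* S) (d : ℕ) (f : R[X]) (x y : R) :
    σ (hev d f x y) = hev d (f.map σ) (σ x) (σ y) := by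
  simp [hev]

end hevlemmas

lemma hev_field {L : Type*} [Field L] (d : ℕ) (f : L[X]) (hf : f.natDegree ≤ d) (x y : L)
    (hy : y ≠ 0) : hev d f x y = y ^ d * f.eval (x / y) := by
  have := hev_smul d f y (x / y) 1
  rw [mul_div_cancel₀ _ hy, mul_one, hev_one_right d f hf] at this
  simpa using this

/-- Numerator of the conjugate. -/
def cF {R : Type*} [CommRing R] (d : ℕ) (f g : R[X]) (a b c e : R) : R[X] :=
  C a * hev d f (C e * X - C b) (C a - C c * X) + C b * hev d g (C e * X - C b) (C a - C c * X)

/-- Denominator of the conjugate. -/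
def cG {R : Type*} [CommRing R] (d : ℕ) (f g : R[X]) (a b c e : R) : R[X] :=
  C c * hev d f (C e * X - C b) (C a - C c * X) + C e * hev d g (C e * X - C b) (C a - C c * X)

section conj
variable {R A : Type*} [CommRing R] [CommRing A] [Algebra R A]

lemma natDegree_L (e b : R) : (C e * X - C b : R[X]).natDegree ≤ 1 := by compute_degree
lemma natDegree_M (a c : R) : (C a - C c * X : R[X]).natDegree ≤ 1 := by compute_degree

lemma hev_L (e b : R) (x y : A) :
    hev 1 (C e * X - C b : R[X]) x y = algebraMap R A e * x - algebraMap R A b * y := by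
  simp [hev, Finset.sum_range_succ, coeff_X, coeff_C]; ring
lemma hev_M (a c : R) (x y : A) :
    hev 1 (C a - C c * X : R[X]) x y = algebraMap R A a * y - algebraMap R A c * x := by
  simp [hev, Finset.sum_range_succ, coeff_X, coeff_C]; ring

lemma hev_cF (d : ℕ) (f g : R[X]) (a b c e : R) (x y : A) :
    hev d (cF d f g a b c e) x y =
      algebraMap R A a * hev d f (algebraMap R A e * x - algebraMap R A b * y)
        (algebraMap R A a * y - algebraMap R A c * x) +
      algebraMap R A b * hev d g (algebraMap R A e * x - algebraMap R A b * y)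
        (algebraMap R A a * y - algebraMap R A c * x) := by
  rw [cF, hev_add, hev_C_mul, hev_C_mul, hev_comp _ _ _ _ (natDegree_L _ _) (natDegree_M _ _),
    hev_comp _ _ _ _ (natDegree_L _ _) (natDegree_M _ _), hev_L, hev_M]

lemma hev_cG (d : ℕ) (f g : R[X]) (a b c e : R) (x y : A) :
    hev d (cG d f g a b c e) x y =
      algebraMap R A c * hev d f (algebraMap R A e * x - algebraMap R A b * y)
        (algebraMap R A a * y - algebraMap R A c * x) +
      algebraMap R A e * hev d g (algebraMap R A e * x - algebraMap R A b * y)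
        (algebraMap R A a * y - algebraMap R A c * x) := by
  rw [cG, hev_add, hev_C_mul, hev_C_mul, hev_comp _ _ _ _ (natDegree_L _ _) (natDegree_M _ _),
    hev_comp _ _ _ _ (natDegree_L _ _) (natDegree_M _ _), hev_L, hev_M]

lemma cF_natDegree (d : ℕ) (f g : R[X]) (a b c e : R) : (cF d f g a b c e).natDegree ≤ d :=
  natDegree_add_le_of_degree_le
    ((natDegree_C_mul_le _ _).trans (hev_natDegree_le _ _ _ _ (natDegree_L _ _) (natDegree_M _ _)))
    ((natDegree_C_mul_le _ _).trans (hev_natDegree_le _ _ _ _ (natDegree_L _ _) (natDegree_M _ _)))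

lemma cG_natDegree (d : ℕ) (f g : R[X]) (a b c e : R) : (cG d f g a b c e).natDegree ≤ d :=
  natDegree_add_le_of_degree_le
    ((natDegree_C_mul_le _ _).trans (hev_natDegree_le _ _ _ _ (natDegree_L _ _) (natDegree_M _ _)))
    ((natDegree_C_mul_le _ _).trans (hev_natDegree_le _ _ _ _ (natDegree_L _ _) (natDegree_M _ _)))

lemma cF_map {S : Type*} [CommRing S] (σ : R →+* S) (d : ℕ) (f g : R[X]) (a b c e : R) :
    (cF d f g a b c e).map σ = cF d (f.map σ) (g.map σ) (σ a) (σ b) (σ c) (σ e) := by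
  simp [cF, hev_map]

lemma cG_map {S : Type*} [CommRing S] (σ : R →+* S) (d : ℕ) (f g : R[X]) (a b c e : R) :
    (cG d f g a b c e).map σ = cG d (f.map σ) (g.map σ) (σ a) (σ b) (σ c) (σ e) := by
  simp [cG, hev_map]
end conj

section nondeg
variable {L : Type*} [Field L]

lemma nondeg_of (f g : L[X]) (hc : IsCoprime f g) (x y : L) (hxy : x ≠ 0 ∨ y ≠ 0)
    (h1 : hev (max f.natDegree g.natDegree) f x y = 0)
    (h2 : hev (max f.natDegree g.natDegree) g x y = 0) : False := by
  by_cases hy : y = 0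
  · subst hy
    have hx : x ≠ 0 := by simpa using hxy
    rw [hev_y_zero] at h1 h2
    simp only [Algebra.algebraMap_self, RingHom.id_apply, mul_eq_zero, pow_ne_zero _ hx,
      or_false] at h1 h2
    have hf0 : f ≠ 0 ∨ g ≠ 0 := by
      by_contra h
      push Not at h
      rw [h.1, h.2] at hc
      exact not_isCoprime_zero_zero hc
    rcases le_total f.natDegree g.natDegree with h | h
    · rw [max_eq_right h] at h1 h2
      have hg : g = 0 := leadingCoeff_eq_zero.1 h2
      subst hg
      have : f.natDegree = 0 := by simpa using h
      rw [natDegree_zero, ← this] at h1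
      simp [leadingCoeff_eq_zero.1 h1] at hf0
    · rw [max_eq_left h] at h1 h2
      have hg : f = 0 := leadingCoeff_eq_zero.1 h1
      subst hg
      have : g.natDegree = 0 := by simpa using h
      rw [natDegree_zero, ← this] at h2
      simp [leadingCoeff_eq_zero.1 h2] at hf0
  · rw [hev_field _ _ (le_max_left _ _) _ _ hy] at h1
    rw [hev_field _ _ (le_max_right _ _) _ _ hy] at h2
    simp only [mul_eq_zero, pow_ne_zero _ hy, false_or] at h1 h2
    obtain ⟨u, w, huw⟩ := hc
    have := congrArg (eval (x / y)) huw
    simp [h1, h2] at this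

lemma of_nondeg [IsAlgClosed L] (d : ℕ) (f g : L[X]) (hf : f.natDegree ≤ d) (hg : g.natDegree ≤ d)
    (h : ∀ x y : L, (x ≠ 0 ∨ y ≠ 0) → hev d f x y = 0 → hev d g x y = 0 → False) :
    IsCoprime f g ∧ max f.natDegree g.natDegree = d := by
  constructor
  · by_contra hnc
    rw [isCoprime_iff_aeval_ne_zero_of_isAlgClosed L L] at hnc
    push Not at hnc
    obtain ⟨x, hx1, hx2⟩ := hnc
    exact h x 1 (by simp) (by rw [hev_one_right _ _ hf, hx1]) (by rw [hev_one_right _ _ hg, hx2])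
  · refine le_antisymm (max_le hf hg) ?_
    by_contra hlt
    push Not at hlt
    rw [max_lt_iff] at hlt
    refine h 1 0 (by simp) ?_ ?_
    · rw [hev_y_zero, coeff_eq_zero_of_natDegree_lt hlt.1]; simp
    · rw [hev_y_zero, coeff_eq_zero_of_natDegree_lt hlt.2]; simp

lemma conj_coprime_alg [IsAlgClosed L] (d : ℕ) (f g : L[X]) (hc : IsCoprime f g)
    (hd : max f.natDegree g.natDegree = d) (a b c e : L) (hdet : a * e - b * c ≠ 0) :
    IsCoprime (cF d f g a b c e) (cG d f g a b c e) ∧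
      max (cF d f g a b c e).natDegree (cG d f g a b c e).natDegree = d := by
  refine of_nondeg d _ _ (cF_natDegree _ _ _ _ _ _ _) (cG_natDegree _ _ _ _ _ _ _) ?_
  intro x y hxy h1 h2
  rw [hev_cF] at h1
  rw [hev_cG] at h2
  simp only [Algebra.algebraMap_self, RingHom.id_apply] at h1 h2
  set p := hev d f (e * x - b * y) (a * y - c * x) with hp
  set q := hev d g (e * x - b * y) (a * y - c * x) with hq
  have hp0 : p = 0 := by
    have : (a * e - b * c) * p = 0 := by linear_combination e * h1 - b * h2
    simpa [hdet] using this
  have hq0 : q = 0 := by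
    have : (a * e - b * c) * q = 0 := by linear_combination a * h2 - c * h1
    simpa [hdet] using this
  subst hd
  refine nondeg_of f g hc _ _ ?_ hp0 hq0
  by_contra hn
  push Not at hn
  have hx : (a * e - b * c) * x = 0 := by linear_combination a * hn.1 + b * hn.2
  have hy : (a * e - b * c) * y = 0 := by linear_combination c * hn.1 + e * hn.2
  simp [hdet] at hx hy
  simp [hx, hy] at hxy

lemma conj_coprime (d : ℕ) (f g : L[X]) (hc : IsCoprime f g)
    (hd : max f.natDegree g.natDegree = d) (a b c e : L) (hdet : a * e - b * c ≠ 0) :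
    IsCoprime (cF d f g a b c e) (cG d f g a b c e) ∧
      max (cF d f g a b c e).natDegree (cG d f g a b c e).natDegree = d := by
  have := conj_coprime_alg d (f.map (algebraMap L (AlgebraicClosure L)))
    (g.map (algebraMap L (AlgebraicClosure L))) ((isCoprime_map _).2 hc)
    (by simpa using hd) (algebraMap L (AlgebraicClosure L) a) (algebraMap L (AlgebraicClosure L) b)
    (algebraMap L (AlgebraicClosure L) c) (algebraMap L (AlgebraicClosure L) e)
    (by rw [← map_mul, ← map_mul, ← map_sub]; exact (_root_.map_ne_zero _).2 hdet)
  rw [← cF_map, ← cG_map, isCoprime_map, natDegree_map, natDegree_map] at this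
  exact this
end nondeg

section points
variable {L : Type*} [Field L]

open Classical in
/-- The point `[x : y]` of the projective line. -/
def mkp (x y : L) : Option L := if y = 0 then none else some (x / y)

lemma mkp_surj (p : Option L) : ∃ x y : L, (x ≠ 0 ∨ y ≠ 0) ∧ p = mkp x y := by
  cases p with
  | none => exact ⟨1, 0, by simp, by simp [mkp]⟩
  | some x => exact ⟨x, 1, by simp, by simp [mkp]⟩

lemma mkp_eq_iff (x y x' y' : L) (h : x ≠ 0 ∨ y ≠ 0) (h' : x' ≠ 0 ∨ y' ≠ 0) :
    mkp x y = mkp x' y' ↔ x * y' = x' * y := by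
  unfold mkp
  by_cases hy : y = 0 <;> by_cases hy' : y' = 0
  · simp [hy, hy']
  · simp [hy, hy'] at *
    exact h
  · simp [hy, hy'] at *
    tauto
  · simp [hy, hy']
    exact div_eq_div_iff hy hy'

lemma mkp_smul (t x y : L) (ht : t ≠ 0) : mkp (t * x) (t * y) = mkp x y := by
  unfold mkp
  by_cases hy : y = 0
  · simp [hy]
  · simp [hy, ht, mul_div_mul_left _ _ ht]

lemma exists_mu (x y p q : L) (h : x ≠ 0 ∨ y ≠ 0) (h' : p ≠ 0 ∨ q ≠ 0) (he : mkp p q = mkp x y) :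
    ∃ μ : L, p = μ * x ∧ q = μ * y := by
  rw [mkp_eq_iff _ _ _ _ h' h] at he
  by_cases hy : y = 0
  · have hx : x ≠ 0 := by simpa [hy] using h
    refine ⟨p / x, by field_simp, ?_⟩
    subst hy
    simp [hx] at he
    simp [he]
  · exact ⟨q / y, by field_simp; linear_combination he, by field_simp⟩

lemma rmap_mkp (f g : L[X]) (hc : IsCoprime f g) (hd : 1 ≤ max f.natDegree g.natDegree) (x y : L)
    (h : x ≠ 0 ∨ y ≠ 0) :
    rmap f g (mkp x y) = mkp (hev (max f.natDegree g.natDegree) f x y)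
      (hev (max f.natDegree g.natDegree) g x y) := by
  by_cases hy : y = 0
  · subst hy
    have hx : x ≠ 0 := by simpa using h
    rw [hev_y_zero, hev_y_zero]
    have e : mkp x (0 : L) = none := by simp [mkp]
    rw [e]
    unfold rmap mkp
    have hxd : x ^ (max f.natDegree g.natDegree) ≠ 0 := pow_ne_zero _ hx
    by_cases hlt : g.natDegree < f.natDegree
    · rw [if_pos hlt, if_pos]
      rw [coeff_eq_zero_of_natDegree_lt (by simpa using hlt)]
      simp
    · push Not at hlt
      rw [max_eq_right hlt] at hd ⊢
      have hg : g.leadingCoeff ≠ 0 := by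
        rw [leadingCoeff_ne_zero]; rintro rfl; simp at hd
      rw [if_neg (by omega), if_neg]
      · rw [max_eq_right hlt] at hxd
        simp only [Algebra.algebraMap_self, RingHom.id_apply]
        rw [mul_div_mul_right _ _ hxd]; rfl
      · simpa [hx] using hg
  · rw [hev_field _ _ (le_max_left _ _) _ _ hy, hev_field _ _ (le_max_right _ _) _ _ hy]
    have e : mkp x y = some (x / y) := by simp [mkp, hy]
    rw [mkp_smul _ _ _ (pow_ne_zero _ hy), e]
    rfl

variable [IsAlgClosed L]

lemma mob_mkp (a b c e : L) (hdet : a * e - b * c ≠ 0) (x y : L) (h : x ≠ 0 ∨ y ≠ 0) :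
    mob a b c e (mkp x y) = mkp (a * x + b * y) (c * x + e * y) := by
  have h1 : ∀ (s t x y : L), hev 1 (C s * X + C t) x y = s * x + t * y := by
    intro s t x y
    simp [hev, Finset.sum_range_succ, coeff_X, coeff_C]; ring
  obtain ⟨hc, hm⟩ := of_nondeg 1 (C a * X + C b) (C c * X + C e) (by compute_degree)
    (by compute_degree) (by
      intro x y hxy p q
      rw [h1] at p q
      have hx : (a * e - b * c) * x = 0 := by linear_combination e * p - b * q
      have hy : (a * e - b * c) * y = 0 := by linear_combination a * q - c * p
      simp [hdet] at hx hy
      simp [hx, hy] at hxy)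
  unfold mob
  rw [rmap_mkp _ _ hc (by omega) _ _ h, hm, h1, h1]

lemma lin_ne_s16 (a b c e : L) (hdet : a * e - b * c ≠ 0) (x y : L) (h : x ≠ 0 ∨ y ≠ 0) :
    a * x + b * y ≠ 0 ∨ c * x + e * y ≠ 0 := by
  by_contra hn
  push Not at hn
  obtain ⟨p, q⟩ := hn
  have hx : (a * e - b * c) * x = 0 := by linear_combination e * p - b * q
  have hy : (a * e - b * c) * y = 0 := by linear_combination a * q - c * p
  simp [hdet] at hx hy
  simp [hx, hy] at h

lemma mob_surj (a b c e : L) (hdet : a * e - b * c ≠ 0) : Function.Surjective (mob a b c e) := by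
  intro p
  obtain ⟨x, y, h, rfl⟩ := mkp_surj p
  have h2 := lin_ne_s16 e (-b) (-c) a (by convert hdet using 1; ring) x y h
  refine ⟨mkp (e * x + -b * y) (-c * x + a * y), ?_⟩
  rw [mob_mkp _ _ _ _ hdet _ _ h2, ← mkp_smul (a * e - b * c) x y hdet]
  congr 1 <;> ring

lemma mob_comp_s16 (a b c e a' b' c' e' : L) (hdet : a * e - b * c ≠ 0)
    (hdet' : a' * e' - b' * c' ≠ 0) (p : Option L) :
    mob a b c e (mob a' b' c' e' p) =
      mob (a * a' + b * c') (a * b' + b * e') (c * a' + e * c') (c * b' + e * e') p := by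
  obtain ⟨x, y, h, rfl⟩ := mkp_surj p
  rw [mob_mkp _ _ _ _ hdet' _ _ h, mob_mkp _ _ _ _ hdet _ _ (lin_ne_s16 _ _ _ _ hdet' _ _ h),
    mob_mkp _ _ _ _ _ _ _ h]
  · congr 1 <;> ring
  · have := mul_ne_zero hdet hdet'
    convert this using 1; ring

lemma mob_inj_s16 (a b c e : L) (hdet : a * e - b * c ≠ 0) : Function.Injective (mob a b c e) := by
  intro p q hpq
  obtain ⟨x, y, h, rfl⟩ := mkp_surj p
  obtain ⟨x', y', h', rfl⟩ := mkp_surj q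
  rw [mob_mkp _ _ _ _ hdet _ _ h, mob_mkp _ _ _ _ hdet _ _ h',
    mkp_eq_iff _ _ _ _ (lin_ne_s16 _ _ _ _ hdet _ _ h) (lin_ne_s16 _ _ _ _ hdet _ _ h')] at hpq
  rw [mkp_eq_iff _ _ _ _ h h']
  apply mul_left_cancel₀ hdet
  linear_combination hpq

lemma conj_rmap (f g : L[X]) (hc : IsCoprime f g) (d : ℕ) (hd : max f.natDegree g.natDegree = d)
    (hd1 : 1 ≤ d) (a b c e : L) (hdet : a * e - b * c ≠ 0) :
    rmap (cF d f g a b c e) (cG d f g a b c e) ∘ mob a b c e = mob a b c e ∘ rmap f g := by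
  funext p
  obtain ⟨x, y, h, rfl⟩ := mkp_surj p
  obtain ⟨hc', hd'⟩ := conj_coprime d f g hc hd a b c e hdet
  simp only [Function.comp_apply]
  have hn : hev d f x y ≠ 0 ∨ hev d g x y ≠ 0 := by
    by_contra hn
    push Not at hn
    subst hd
    exact nondeg_of f g hc x y h hn.1 hn.2
  rw [mob_mkp _ _ _ _ hdet _ _ h, rmap_mkp _ _ hc' (by omega) _ _ (lin_ne_s16 _ _ _ _ hdet _ _ h),
    hd', rmap_mkp _ _ hc (by omega) _ _ h, hd, mob_mkp _ _ _ _ hdet _ _ hn, hev_cF, hev_cG]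
  simp only [Algebra.algebraMap_self, RingHom.id_apply]
  have e1 : e * (a * x + b * y) - b * (c * x + e * y) = (a * e - b * c) * x := by ring
  have e2 : a * (c * x + e * y) - c * (a * x + b * y) = (a * e - b * c) * y := by ring
  rw [e1, e2, hev_smul, hev_smul,
    ← mkp_smul _ (a * hev d f x y + b * hev d g x y) _ (pow_ne_zero d hdet)]
  congr 1 <;> ring

lemma rmap_unique (f g F G : L[X]) (hc : IsCoprime f g) (hC : IsCoprime F G)
    (h : rmap f g = rmap F G) : ∃ t : L, t ≠ 0 ∧ F = C t * f ∧ G = C t * g := by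
  have key : f * G = F * g := by
    refine Polynomial.funext fun x => ?_
    have := congrFun h (some x)
    unfold rmap at this
    simp only at this
    rw [eval_mul, eval_mul]
    by_cases h1 : g.eval x = 0 <;> by_cases h2 : G.eval x = 0
    · simp [h1, h2]
    · simp [h1, h2] at this
    · simp [h1, h2] at this
    · simp [h1, h2] at this
      field_simp at this
      linear_combination this
  have d1 : f ∣ F := hc.dvd_of_dvd_mul_right (Dvd.intro _ key)
  have d2 : g ∣ G := hc.symm.dvd_of_dvd_mul_left (Dvd.intro_left _ key.symm)
  have d3 : F ∣ f := hC.dvd_of_dvd_mul_right (Dvd.intro _ key.symm)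
  have d4 : G ∣ g := hC.symm.dvd_of_dvd_mul_left (Dvd.intro_left _ key)
  obtain ⟨u, hu⟩ := associated_of_dvd_dvd d1 d3
  obtain ⟨w, hw⟩ := associated_of_dvd_dvd d2 d4
  obtain ⟨r, hr, hru⟩ := Polynomial.isUnit_iff.1 u.isUnit
  obtain ⟨s, hs, hsw⟩ := Polynomial.isUnit_iff.1 w.isUnit
  rw [← hru] at hu
  rw [← hsw] at hw
  have hr0 := hr.ne_zero
  have hs0 := hs.ne_zero
  by_cases hf : f = 0
  · exact ⟨s, hs0, by rw [← hu, hf]; simp, by rw [← hw, mul_comm]⟩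
  by_cases hg : g = 0
  · exact ⟨r, hr0, by rw [← hu, mul_comm], by rw [← hw, hg]; simp⟩
  rw [← hu, ← hw] at key
  have : (f * g) * C s = (f * g) * C r := by linear_combination key
  have := C_injective (mul_left_cancel₀ (mul_ne_zero hf hg) this)
  subst this
  exact ⟨s, hs0, by rw [← hu, mul_comm], by rw [← hw, mul_comm]⟩

end points

section attr
variable {L : Type*} [Field L]

/-- The fixed point form along the line `w + T u`. -/
def fform (d : ℕ) (f g : L[X]) (x y u w : L) : L[X] :=
  (C y + C w * X) * hev d f (C x + C u * X) (C y + C w * X) -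
    (C x + C u * X) * hev d g (C x + C u * X) (C y + C w * X)

/-- All fixed points are attracting (consequence, in homogeneous form). -/
def Attr (v : AbsoluteValue L ℝ) (d : ℕ) (f g : L[X]) : Prop :=
  ∀ x y u w μ : L, (x ≠ 0 ∨ y ≠ 0) → hev d f x y = μ * x → hev d g x y = μ * y →
    v ((fform d f g x y u w).coeff 1) = v μ * v (x * w - y * u)

lemma attr_smul (v : AbsoluteValue L ℝ) (d : ℕ) (f g : L[X]) (h : Attr v d f g) (t : L)
    (ht : t ≠ 0) : Attr v d (C t * f) (C t * g) := by
  intro x y u w μ hxy h1 h2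
  rw [hev_C_mul] at h1 h2
  simp only [Algebra.algebraMap_self, RingHom.id_apply] at h1 h2
  have := h x y u w (μ / t) hxy (by field_simp; linear_combination h1)
    (by field_simp; linear_combination h2)
  have e : fform d (C t * f) (C t * g) x y u w = C t * fform d f g x y u w := by
    simp only [fform, hev_C_mul, algebraMap_eq]; ring
  rw [e, coeff_C_mul, map_mul, this, map_div₀]
  have : v t ≠ 0 := by simpa using ht
  field_simp

lemma attr_conj (v : AbsoluteValue L ℝ) (d : ℕ) (f g : L[X]) (h : Attr v d f g) (a b c e : L)
    (hdet : a * e - b * c ≠ 0) : Attr v d (cF d f g a b c e) (cG d f g a b c e) := by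
  intro x y u w μ hxy h1 h2
  rw [hev_cF] at h1
  rw [hev_cG] at h2
  simp only [Algebra.algebraMap_self, RingHom.id_apply] at h1 h2
  have hne : e * x - b * y ≠ 0 ∨ a * y - c * x ≠ 0 := by
    by_contra hn
    push Not at hn
    have hx : (a * e - b * c) * x = 0 := by linear_combination a * hn.1 + b * hn.2
    have hy : (a * e - b * c) * y = 0 := by linear_combination c * hn.1 + e * hn.2
    simp [hdet] at hx hy
    simp [hx, hy] at hxy
  have := h (e * x - b * y) (a * y - c * x) (e * u - b * w) (a * w - c * u) (μ / (a * e - b * c))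
    hne
    (by rw [div_mul_eq_mul_div, eq_div_iff hdet]; linear_combination e * h1 - b * h2)
    (by rw [div_mul_eq_mul_div, eq_div_iff hdet]; linear_combination a * h2 - c * h1)
  have e1 : fform d (cF d f g a b c e) (cG d f g a b c e) x y u w =
      fform d f g (e * x - b * y) (a * y - c * x) (e * u - b * w) (a * w - c * u) := by
    simp only [fform, hev_cF, hev_cG, algebraMap_eq]
    have e1 : C e * (C x + C u * X) - C b * (C y + C w * X) =
      C (e * x - b * y) + C (e * u - b * w) * X := by simp only [C_sub, C_mul]; ring
    have e2 : C a * (C y + C w * X) - C c * (C x + C u * X) =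
      C (a * y - c * x) + C (a * w - c * u) * X := by simp only [C_sub, C_mul]; ring
    rw [e1, e2]
    simp only [C_sub, C_mul]; ring
  rw [e1, this, ← map_mul, ← map_mul]
  congr 1
  field_simp
  ring

/-- Partial derivative in `x`. -/
def hx (d : ℕ) (f : L[X]) (x y : L) : L :=
  ∑ i ∈ Finset.range (d + 1), f.coeff i * (i * x ^ (i - 1)) * y ^ (d - i)
/-- Partial derivative in `y`. -/
def hy (d : ℕ) (f : L[X]) (x y : L) : L :=
  ∑ i ∈ Finset.range (d + 1), f.coeff i * x ^ i * ((d - i : ℕ) * y ^ (d - i - 1))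

lemma euler_s16 (d : ℕ) (f : L[X]) (x y : L) :
    x * hx d f x y + y * hy d f x y = d * hev d f x y := by
  simp only [hx, hy, hev, Finset.mul_sum, ← Finset.sum_add_distrib]
  refine Finset.sum_congr rfl fun i hi => ?_
  simp only [Finset.mem_range] at hi
  obtain ⟨j, rfl⟩ : ∃ j, d = i + j := ⟨d - i, by omega⟩
  simp only [Nat.add_sub_cancel_left, Algebra.algebraMap_self, RingHom.id_apply]
  rcases i with _ | i <;> rcases j with _ | j <;> simp <;> ring

lemma hev_coeff_one (d : ℕ) (f : L[X]) (x y u w : L) :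
    (derivative (hev d f (C x + C u * X) (C y + C w * X))).eval 0 = u * hx d f x y + w * hy d f x y := by
  simp only [hx, hy, hev, Finset.mul_sum, ← Finset.sum_add_distrib, derivative_sum, eval_finsetSum]
  refine Finset.sum_congr rfl fun i hi => ?_
  simp [derivative_pow, algebraMap_eq]
  ring

lemma hev_eval_zero (d : ℕ) (f : L[X]) (x y u w : L) :
    (hev d f (C x + C u * X) (C y + C w * X)).eval 0 = hev d f x y := by
  simp [hev, eval_finsetSum]

lemma fform_coeff_one (d : ℕ) (f g : L[X]) (x y u w : L) :
    (fform d f g x y u w).coeff 1 = w * hev d f x y - u * hev d g x y +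
      u * (y * hx d f x y - x * hx d g x y) + w * (y * hy d f x y - x * hy d g x y) := by
  have : (fform d f g x y u w).coeff 1 = (derivative (fform d f g x y u w)).eval 0 := by
    rw [← coeff_zero_eq_eval_zero, coeff_derivative]; simp
  rw [this, fform]
  simp [hev_coeff_one, hev_eval_zero]
  ring

lemma hx_field (d : ℕ) (f : L[X]) (hf : f.natDegree ≤ d) (x y : L) (hy : y ≠ 0) :
    y * hx d f x y = y ^ d * (derivative f).eval (x / y) := by
  rw [derivative_eval, sum_over_range' _ _ (d + 1) (Nat.lt_succ_of_le hf)]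
  · simp only [hx, Finset.mul_sum]
    refine Finset.sum_congr rfl fun i hi => ?_
    simp only [Finset.mem_range] at hi
    obtain ⟨j, rfl⟩ : ∃ j, d = i + j := ⟨d - i, by omega⟩
    simp only [Nat.add_sub_cancel_left]
    rcases i with _ | i
    · simp
    · simp only [Nat.add_sub_cancel]
      rw [div_pow]
      field_simp
      ring
  · simp

lemma hy_zero (d : ℕ) (hd : 1 ≤ d) (f : L[X]) (x : L) : hy d f x 0 = f.coeff (d - 1) * x ^ (d - 1) := by
  obtain ⟨n, rfl⟩ : ∃ n, d = n + 1 := ⟨d - 1, by omega⟩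
  unfold hy
  rw [Finset.sum_range_succ, Finset.sum_range_succ, Finset.sum_eq_zero]
  · simp
  · intro i hi
    simp only [Finset.mem_range] at hi
    rw [zero_pow (by omega)]; simp

lemma v_one_sub (v : AbsoluteValue L ℝ) (hna : IsNonarchimedean (⇑v)) (t : L) (ht : v t < 1) :
    v (1 - t) = 1 := by
  apply le_antisymm
  · have := hna 1 (-t)
    rw [← sub_eq_add_neg] at this
    simp only [map_one, map_neg_eq_map] at this
    exact this.trans (max_le le_rfl ht.le)
  · by_contra hlt
    push Not at hlt
    have := hna (1 - t) t
    rw [sub_add_cancel, map_one] at this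
    exact absurd (this.trans_lt (max_lt hlt ht)) (lt_irrefl _)

lemma multiplier_none (f g : L[X]) (d : ℕ) (hd : max f.natDegree g.natDegree = d) (hd1 : 1 ≤ d)
    (hg : g.coeff d = 0) : multiplier f g none = g.coeff (d - 1) / f.coeff d := by
  unfold multiplier
  simp only [hd]
  have h0 : ∀ p : L[X], (reflect d p).eval 0 = p.coeff d := by
    intro p
    rw [← coeff_zero_eq_eval_zero, coeff_reflect]; simp [revAt_le]
  have h1 : (derivative (reflect d g)).eval 0 = g.coeff (d - 1) := by
    rw [← coeff_zero_eq_eval_zero, coeff_derivative, coeff_reflect]; simp [revAt_le hd1]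
  rw [eval_sub, eval_mul, eval_mul, h0, h0, h1, hg]
  by_cases hf : f.coeff d = 0
  · simp [hf]
  · field_simp; ring

lemma attr_of_multiplier (v : AbsoluteValue L ℝ) (hna : IsNonarchimedean (⇑v)) (d : ℕ) (f g : L[X])
    (hc : IsCoprime f g) (hd : max f.natDegree g.natDegree = d) (hd1 : 1 ≤ d)
    (hattr : ∀ p : Option L, rmap f g p = p → v (multiplier f g p) < 1) : Attr v d f g := by
  intro x y u w μ hxy h1 h2
  have hμ : μ ≠ 0 := by
    rintro rfl
    subst hd
    exact nondeg_of f g hc x y hxy (by simpa using h1) (by simpa using h2)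
  have hfix : rmap f g (mkp x y) = mkp x y := by
    rw [rmap_mkp f g hc (by omega) x y hxy, hd, h1, h2, mkp_smul _ _ _ hμ]
  have hm := hattr _ hfix
  have hfd : f.natDegree ≤ d := hd ▸ le_max_left _ _
  have hgd : g.natDegree ≤ d := hd ▸ le_max_right _ _
  rw [fform_coeff_one, h1, h2]
  have E1 := euler_s16 d f x y
  have E2 := euler_s16 d g x y
  rw [h1] at E1
  rw [h2] at E2
  have E : x * (y * hx d f x y - x * hx d g x y) + y * (y * hy d f x y - x * hy d g x y) = 0 := by
    linear_combination y * E1 - x * E2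
  have key : w * (μ * x) - u * (μ * y) + u * (y * hx d f x y - x * hx d g x y) +
      w * (y * hy d f x y - x * hy d g x y) =
      μ * (x * w - y * u) * (1 - multiplier f g (mkp x y)) := by
    by_cases hy0 : y = 0
    · subst hy0
      have hx0 : x ≠ 0 := by simpa using hxy
      have e : mkp x (0 : L) = none := by simp [mkp]
      rw [hev_y_zero] at h1 h2
      simp only [Algebra.algebraMap_self, RingHom.id_apply, mul_zero, mul_eq_zero,
        pow_ne_zero _ hx0, or_false] at h1 h2
      have hfd0 : f.coeff d ≠ 0 := by
        intro h0
        rw [h0] at h1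
        simp [hμ, hx0] at h1
      rw [e, multiplier_none f g d hd hd1 h2, hy_zero d hd1 g]
      have E' : hx d g x 0 = 0 := by simpa [hx0] using E
      rw [E']
      have hpow : x ^ d = x * x ^ (d - 1) := by rw [← pow_succ']; congr 1; omega
      rw [hpow] at h1
      have hμe : μ = f.coeff d * x ^ (d - 1) := by
        apply mul_right_cancel₀ hx0
        linear_combination -h1
      rw [hμe]
      field_simp
      ring
    · have e : mkp x y = some (x / y) := by simp [mkp, hy0]
      rw [e]
      have F1 := hx_field d f hfd x y hy0
      have F2 := hx_field d g hgd x y hy0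
      rw [hev_field _ _ hfd _ _ hy0] at h1
      rw [hev_field _ _ hgd _ _ hy0] at h2
      unfold multiplier
      simp only [eval_sub, eval_mul]
      set z := x / y with hz
      have hxz : x = z * y := by rw [hz]; field_simp
      have hyd : y ^ d ≠ 0 := pow_ne_zero _ hy0
      have hgz : g.eval z ≠ 0 := by
        intro h0
        rw [h0] at h2
        simp [hμ, hy0] at h2
      have hfz : f.eval z = z * g.eval z := by
        apply mul_left_cancel₀ hyd
        linear_combination h1 - z * h2 + μ * hxz
      rw [hfz]
      have hB : w * (y * hy d f x y - x * hy d g x y) =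
        - w * z * (y * hx d f x y - x * hx d g x y) := by
        apply mul_left_cancel₀ hy0
        linear_combination w * E - w * (y * hx d f x y - x * hx d g x y) * hxz
      rw [hB]
      have hA : (y * hx d f x y - x * hx d g x y) * g.eval z =
          μ * y * ((derivative f).eval z - z * (derivative g).eval z) := by
        linear_combination g.eval z * F1 - z * g.eval z * F2 - hx d g x y * g.eval z * hxz + ((derivative f).eval z - z * (derivative g).eval z) * h2
      have hA' : (y * hx d f x y - x * hx d g x y) =
          μ * y * ((derivative f).eval z - z * (derivative g).eval z) / g.eval z := by
        rw [eq_div_iff hgz, hA]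
      rw [hA', hxz]
      field_simp
      ring
  rw [key, map_mul, map_mul, v_one_sub v hna _ hm, mul_one]

end attr

section count
variable {L : Type*} [Field L]

lemma fform_fin (d : ℕ) (f g : L[X]) (hf : f.natDegree ≤ d) (hg : g.natDegree ≤ d) (x : L) :
    (fform d f g x 1 1 0).coeff 1 = (derivative (f - X * g)).eval x := by
  have : (fform d f g x 1 1 0).coeff 1 = (derivative (fform d f g x 1 1 0)).eval 0 := by
    rw [← coeff_zero_eq_eval_zero, coeff_derivative]; simp
  rw [this]
  have e : fform d f g x 1 1 0 = (f - X * g).comp (C x + X) := by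
    unfold fform
    simp only [C_1, C_0, zero_mul, add_zero, one_mul]
    rw [hev_one_right _ _ hf, hev_one_right _ _ hg]
    simp [comp, aeval_def]
  rw [e, derivative_comp]
  simp

lemma g_coeff_zero_iff (f g : L[X]) (d : ℕ) (hd : max f.natDegree g.natDegree = d) (hd1 : 1 ≤ d) :
    g.coeff d = 0 ↔ g.natDegree < f.natDegree := by
  constructor
  · intro h
    by_contra hlt
    push Not at hlt
    rw [max_eq_right hlt] at hd
    subst hd
    have := leadingCoeff_eq_zero.1 h
    simp [this] at hd1
  · intro h
    rw [max_eq_left h.le] at hd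
    exact coeff_eq_zero_of_natDegree_lt (hd ▸ h)

lemma fix_some_iff (f g : L[X]) (hc : IsCoprime f g) (x : L) :
    rmap f g (some x) = some x ↔ f.eval x = x * g.eval x := by
  unfold rmap
  by_cases h : g.eval x = 0
  · simp only [h, if_true, mul_zero]
    constructor
    · simp
    · intro h'
      obtain ⟨u, w, huw⟩ := hc
      have := congrArg (eval x) huw
      simp [h, h'] at this
  · simp only [h, if_false, Option.some_inj]
    rw [div_eq_iff h]

lemma count_fixed [IsAlgClosed L] (v : AbsoluteValue L ℝ) (d : ℕ) (f g : L[X])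
    (hc : IsCoprime f g) (hd : max f.natDegree g.natDegree = d) (hd1 : 1 ≤ d)
    (hA : Attr v d f g) : {p : Option L | rmap f g p = p}.ncard = d + 1 := by
  classical
  have hfd : f.natDegree ≤ d := hd ▸ le_max_left _ _
  have hgd : g.natDegree ≤ d := hd ▸ le_max_right _ _
  set P := f - X * g with hP
  have hroot : ∀ x : L, P.eval x = 0 ↔ rmap f g (some x) = some x := by
    intro x
    rw [fix_some_iff f g hc, hP]
    simp [sub_eq_zero]
  have hsimple : ∀ x : L, P.eval x = 0 → (derivative P).eval x ≠ 0 := by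
    intro x hx h0
    have hfx := (fix_some_iff f g hc x).1 ((hroot x).1 hx)
    have hgx : g.eval x ≠ 0 := by
      intro h
      rw [h, mul_zero] at hfx
      obtain ⟨u, w, huw⟩ := hc
      have := congrArg (eval x) huw
      simp [h, hfx] at this
    have := hA x 1 1 0 (g.eval x) (by simp)
      (by rw [hev_one_right _ _ hfd]; simp [hfx, mul_comm])
      (by rw [hev_one_right _ _ hgd]; simp)
    rw [fform_fin d f g hfd hgd, ← hP, h0] at this
    simp at this
    exact hgx (v.eq_zero.1 this.symm)
  have hP0 : P ≠ 0 := by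
    intro h
    have := hsimple 0 (by rw [h]; simp)
    rw [h] at this
    simp at this
  have hnodup : P.roots.Nodup := by
    rw [Multiset.nodup_iff_count_le_one]
    intro x
    rw [count_roots]
    by_contra hlt
    push Not at hlt
    have := (one_lt_rootMultiplicity_iff_isRoot hP0).1 hlt
    exact hsimple x this.1 this.2
  have hcard : P.roots.toFinset.card = P.natDegree := by
    rw [Multiset.toFinset_card_of_nodup hnodup, IsAlgClosed.card_roots_eq_natDegree]
  have hdegle : P.natDegree ≤ d + 1 := by
    rw [hP]
    have hX : (X * g).natDegree ≤ 1 + g.natDegree :=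
      natDegree_mul_le.trans (Nat.add_le_add_right natDegree_X_le _)
    exact (natDegree_sub_le _ _).trans (max_le (by omega) (by omega))
  have hcoefd1 : P.coeff (d + 1) = - g.coeff d := by
    rw [hP, coeff_sub, coeff_X_mul, coeff_eq_zero_of_natDegree_lt (by omega), zero_sub]
  by_cases h0 : g.coeff d = 0
  · have hnone : rmap f g none = none := by
      simp [rmap, (g_coeff_zero_iff f g d hd hd1).1 h0]
    have hfd0 : f.coeff d ≠ 0 := by
      intro h
      subst hd
      exact nondeg_of f g hc 1 0 (by simp) (by rw [hev_y_zero, h]; simp)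
        (by rw [hev_y_zero, h0]; simp)
    have hPd : P.coeff d ≠ 0 := by
      have := hA 1 0 0 1 (f.coeff d) (by simp) (by rw [hev_y_zero]; simp)
        (by rw [hev_y_zero, h0]; simp)
      rw [fform_coeff_one, hy_zero d hd1 g, hev_y_zero] at this
      intro h
      obtain ⟨n, rfl⟩ : ∃ n, d = n + 1 := ⟨d - 1, by omega⟩
      rw [hP, coeff_sub, coeff_X_mul] at h
      simp at this
      rw [← sub_eq_add_neg, h] at this
      rw [map_zero] at this
      exact hfd0 (v.eq_zero.1 this.symm)
    have hdeg : P.natDegree = d := by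
      apply le_antisymm
      · by_contra hlt
        push Not at hlt
        have e : P.natDegree = d + 1 := by omega
        have : P.leadingCoeff = 0 := by
          rw [leadingCoeff, e, hcoefd1, h0, neg_zero]
        exact hP0 (leadingCoeff_eq_zero.1 this)
      · exact le_natDegree_of_ne_zero hPd
    have hset : {p : Option L | rmap f g p = p} = ↑(Finset.insertNone P.roots.toFinset) := by
      ext p
      cases p with
      | none => simp [hnone]
      | some x => simp [hP0, hroot]
    rw [hset, Set.ncard_coe_finset, Finset.card_insertNone, hcard, hdeg]
  · have hnone : rmap f g none ≠ none := by
      have : ¬ g.natDegree < f.natDegree := fun h => h0 ((g_coeff_zero_iff f g d hd hd1).2 h)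
      simp [rmap, this]
    have hdeg : P.natDegree = d + 1 := by
      apply le_antisymm hdegle
      apply le_natDegree_of_ne_zero
      rw [hcoefd1]; simpa using h0
    have hset : {p : Option L | rmap f g p = p} =
        ↑(P.roots.toFinset.map Function.Embedding.some) := by
      ext p
      cases p with
      | none => simp [hnone]
      | some x => simp [hP0, hroot]
    rw [hset, Set.ncard_coe_finset, Finset.card_map, hcard, hdeg]
end count

section mobuniq
variable {L : Type*} [Field L]

lemma lin_prop (s t a b : L) (h : s ≠ 0 ∨ t ≠ 0) (h0 : a * s + b * t = 0) :
    ∃ κ : L, a = κ * t ∧ b = - κ * s := by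
  by_cases ht : t = 0
  · have hs : s ≠ 0 := by simpa [ht] using h
    subst ht
    have ha : a = 0 := by simpa [hs] using h0
    exact ⟨-b / s, by simp [ha], by field_simp⟩
  · exact ⟨a / t, by field_simp, by field_simp; linear_combination h0⟩

lemma mkp_none (x y : L) (h : mkp x y = none) : y = 0 := by
  by_contra hy; simp [mkp, hy] at h

lemma mkp_some (x y z : L) (h : mkp x y = some z) : y ≠ 0 ∧ x = z * y := by
  by_cases hy : y = 0
  · simp [mkp, hy] at h
  · simp only [mkp, hy, if_false, Option.some_inj] at h
    exact ⟨hy, by rw [← h]; field_simp⟩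

lemma mob_uniq [IsAlgClosed L] (x₁ x₂ x₃ : Option L) (a b c e a' b' c' e' : L)
    (hdet : a * e - b * c ≠ 0) (hdet' : a' * e' - b' * c' ≠ 0)
    (h1 : mob a b c e x₁ = some 0) (h2 : mob a b c e x₂ = some 1) (h3 : mob a b c e x₃ = none)
    (h1' : mob a' b' c' e' x₁ = some 0) (h2' : mob a' b' c' e' x₂ = some 1)
    (h3' : mob a' b' c' e' x₃ = none) : mob a b c e = mob a' b' c' e' := by
  obtain ⟨s1, t1, n1, rfl⟩ := mkp_surj x₁
  obtain ⟨s2, t2, n2, rfl⟩ := mkp_surj x₂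
  obtain ⟨s3, t3, n3, rfl⟩ := mkp_surj x₃
  rw [mob_mkp _ _ _ _ hdet _ _ ‹_›] at h1 h2 h3
  rw [mob_mkp _ _ _ _ hdet' _ _ ‹_›] at h1' h2' h3'
  obtain ⟨-, h1⟩ := mkp_some _ _ _ h1
  obtain ⟨-, h1'⟩ := mkp_some _ _ _ h1'
  obtain ⟨m, h2⟩ := mkp_some _ _ _ h2
  obtain ⟨m', h2'⟩ := mkp_some _ _ _ h2'
  replace h3 := mkp_none _ _ h3
  replace h3' := mkp_none _ _ h3'
  rw [zero_mul] at h1 h1'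
  rw [one_mul] at h2 h2'
  obtain ⟨κ, rfl, rfl⟩ := lin_prop _ _ _ _ n1 h1
  obtain ⟨κ', rfl, rfl⟩ := lin_prop _ _ _ _ n1 h1'
  obtain ⟨ρ, rfl, rfl⟩ := lin_prop _ _ _ _ n3 h3
  obtain ⟨ρ', rfl, rfl⟩ := lin_prop _ _ _ _ n3 h3'
  have hne : t3 * s2 - s3 * t2 ≠ 0 := by
    intro h
    apply m
    linear_combination ρ * h
  have hne' : t1 * s2 - s1 * t2 ≠ 0 := by
    intro h
    apply m
    linear_combination κ * h - h2
  have key : κ * ρ' = κ' * ρ := by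
    apply mul_right_cancel₀ hne'
    apply mul_right_cancel₀ hne
    linear_combination (t3 * s2 - s3 * t2) * ρ' * h2 - (t3 * s2 - s3 * t2) * ρ * h2'
  funext p
  obtain ⟨x, y, h, rfl⟩ := mkp_surj p
  rw [mob_mkp _ _ _ _ hdet _ _ h, mob_mkp _ _ _ _ hdet' _ _ h,
    mkp_eq_iff _ _ _ _ (lin_ne_s16 _ _ _ _ hdet _ _ h) (lin_ne_s16 _ _ _ _ hdet' _ _ h)]
  linear_combination (t1 * x - s1 * y) * (t3 * x - s3 * y) * key
end mobuniq

section reduction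
variable {L : Type*} [Field L] (v : AbsoluteValue L ℝ) (hna : IsNonarchimedean (⇑v))

lemma quot_isField : IsField ((vints v hna) ⧸ (vmax v hna)) where
  exists_pair_ne := by
    refine ⟨0, 1, fun h => ?_⟩
    rw [← map_one (Ideal.Quotient.mk (vmax v hna)), eq_comm, Ideal.Quotient.eq_zero_iff_mem] at h
    have : v ((1 : vints v hna) : L) < 1 := h
    simp at this
  mul_comm := mul_comm
  mul_inv_cancel := by
    intro a ha
    obtain ⟨x, rfl⟩ := Ideal.Quotient.mk_surjective a
    have hx : ¬ v (x : L) < 1 := by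
      intro h
      apply ha
      rw [Ideal.Quotient.eq_zero_iff_mem]
      exact h
    have hx1 : v (x : L) = 1 := le_antisymm x.2 (not_lt.1 hx)
    have hx0 : (x : L) ≠ 0 := by
      intro h; rw [h] at hx1; simp at hx1
    refine ⟨Ideal.Quotient.mk _ ⟨(x : L)⁻¹, ?_⟩, ?_⟩
    · change v (x : L)⁻¹ ≤ 1
      rw [map_inv₀, hx1]; simp
    · rw [← map_mul, ← map_one (Ideal.Quotient.mk (vmax v hna))]
      congr 1
      ext
      simp [hx0]

lemma conj_coprime' {R : Type*} [CommRing R] (hR : IsField R) (d : ℕ) (f g : R[X])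
    (hc : IsCoprime f g)
    (hd : max f.natDegree g.natDegree = d) (a b c e : R) (hdet : a * e - b * c ≠ 0) :
    IsCoprime (cF d f g a b c e) (cG d f g a b c e) ∧
      max (cF d f g a b c e).natDegree (cG d f g a b c e).natDegree = d := by
  let := hR.toField
  exact conj_coprime d f g hc hd a b c e hdet

lemma liftp_natDegree (f : Polynomial (vints v hna)) : (liftp v hna f).natDegree = f.natDegree :=
  natDegree_map_eq_of_injective Subtype.val_injective _

lemma mk_ne_zero (x : vints v hna) (h : v (x : L) = 1) :
    Ideal.Quotient.mk (vmax v hna) x ≠ 0 := by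
  intro h0
  rw [Ideal.Quotient.eq_zero_iff_mem] at h0
  have : v (x : L) < 1 := h0
  exact absurd h this.ne

lemma good_conj (F G : Polynomial (vints v hna)) (h1 : GoodRep v hna F G) (h2 : GoodRed v hna F G)
    (d : ℕ) (hd : max F.natDegree G.natDegree = d) (a b c e : vints v hna)
    (hdet : v ((a * e - b * c : vints v hna) : L) = 1) :
    GoodRep v hna (cF d F G a b c e) (cG d F G a b c e) ∧
    GoodRed v hna (cF d F G a b c e) (cG d F G a b c e) := by
  have hK := conj_coprime d (liftp v hna F) (liftp v hna G) h1.1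
    (by rw [liftp_natDegree, liftp_natDegree, hd]) (a : L) b c e (by
      intro h
      push_cast at hdet
      rw [h] at hdet
      simp at hdet)
  have hk := conj_coprime' (quot_isField v hna) d (redp v hna F) (redp v hna G) h2.1
    (h2.2.trans hd) (Ideal.Quotient.mk (vmax v hna) a) (Ideal.Quotient.mk (vmax v hna) b)
    (Ideal.Quotient.mk (vmax v hna) c) (Ideal.Quotient.mk (vmax v hna) e)
    (by rw [← map_mul, ← map_mul, ← map_sub]; exact mk_ne_zero v hna _ hdet)
  have eF : cF d (liftp v hna F) (liftp v hna G) (a : L) b c e = liftp v hna (cF d F G a b c e) :=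
    (cF_map (vints v hna).subtype d F G a b c e).symm
  have eG : cG d (liftp v hna F) (liftp v hna G) (a : L) b c e = liftp v hna (cG d F G a b c e) :=
    (cG_map (vints v hna).subtype d F G a b c e).symm
  rw [eF, eG, liftp_natDegree, liftp_natDegree] at hK
  unfold redp at hk
  rw [← cF_map, ← cG_map] at hk
  refine ⟨⟨hK.1, ?_⟩, hk.1, hk.2.trans hK.2.symm⟩
  by_contra hn
  push Not at hn
  have z : ∀ p : Polynomial (vints v hna), (∀ n, v (p.coeff n : L) ≠ 1) →
      p.map (Ideal.Quotient.mk (vmax v hna)) = 0 := by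
    intro p hp
    ext n
    rw [coeff_map, coeff_zero, Ideal.Quotient.eq_zero_iff_mem]
    exact lt_of_le_of_ne (p.coeff n).2 (hp n)
  have hc := hk.1
  rw [z _ (fun n => (hn n).1), z _ (fun n => (hn n).2)] at hc
  obtain ⟨u, w, huw⟩ := hc
  have := congrArg (fun p => p.coeff 0) huw
  simp at this
  obtain ⟨x, y, hxy⟩ := (quot_isField v hna).exists_pair_ne
  exact hxy (by rw [← one_mul x, ← one_mul y, ← this]; simp)

lemma sep_fin (F G : Polynomial (vints v hna)) (d : ℕ) (hF : F.natDegree ≤ d)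
    (hG : G.natDegree ≤ d) (h2 : IsCoprime (redp v hna F) (redp v hna G))
    (hA : Attr v d (liftp v hna F) (liftp v hna G)) (x z : vints v hna)
    (hx : F.eval x = x * G.eval x) (hz : F.eval z = z * G.eval z) (hne : x ≠ z) :
    v ((x : L) - z) = 1 := by
  set P := F - X * G with hP
  have hPx : P.eval x = 0 := by simp [hP, hx]
  have hPz : P.eval z = 0 := by simp [hP, hz]
  have evl : ∀ (p : Polynomial (vints v hna)) (t : vints v hna),
      (liftp v hna p).eval (t : L) = (p.eval t : vints v hna) := by
    intro p t
    exact eval_map_apply (f := (vints v hna).subtype) (p := p) (x := t)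
  have hgx : v ((G.eval x : vints v hna) : L) = 1 := by
    refine le_antisymm (G.eval x).2 (not_lt.1 fun hlt => ?_)
    have m1 : Ideal.Quotient.mk (vmax v hna) (G.eval x) = 0 := by
      rw [Ideal.Quotient.eq_zero_iff_mem]; exact hlt
    have m2 : Ideal.Quotient.mk (vmax v hna) (F.eval x) = 0 := by
      rw [hx, map_mul, m1, mul_zero]
    obtain ⟨u, w, huw⟩ := h2
    have := congrArg (eval (Ideal.Quotient.mk (vmax v hna) x)) huw
    simp only [eval_add, eval_mul, redp, eval_map_apply, m1, m2, mul_zero, add_zero,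
      eval_one] at this
    obtain ⟨x, y, hxy⟩ := (quot_isField v hna).exists_pair_ne
    exact hxy (by rw [← one_mul x, ← one_mul y, ← this]; simp)
  have hPd : v (((derivative P).eval x : vints v hna) : L) = 1 := by
    have := hA x 1 1 0 ((G.eval x : vints v hna) : L) (by simp)
      (by rw [hev_one_right _ _ (by rw [liftp_natDegree]; exact hF), coe_aeval_eq_eval, evl, hx]
          push_cast; ring)
      (by rw [hev_one_right _ _ (by rw [liftp_natDegree]; exact hG), coe_aeval_eq_eval, evl]
          ring)
    rw [fform_fin d _ _ (by rw [liftp_natDegree]; exact hF) (by rw [liftp_natDegree]; exact hG),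
      hgx] at this
    have e : liftp v hna F - X * liftp v hna G = liftp v hna P := by simp [liftp, hP]
    have e' : derivative (liftp v hna P) = liftp v hna (derivative P) := by
      simp [liftp, derivative_map]
    rw [e, e', evl] at this
    simpa using this
  refine le_antisymm (x - z).2 (not_lt.1 fun hlt => ?_)
  obtain ⟨k, hk⟩ := P.binomExpansion x (z - x)
  rw [add_sub_cancel, hPx, hPz, zero_add] at hk
  have hzx : z - x ≠ 0 := sub_ne_zero.2 hne.symm
  have : (derivative P).eval x = k * (x - z) := by
    apply mul_right_cancel₀ hzx
    linear_combination -hk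
  rw [this] at hPd
  push_cast at hPd
  rw [map_mul] at hPd
  have hk1 : v (k : L) ≤ 1 := k.2
  nlinarith [v.nonneg (k : L), v.nonneg ((x : L) - z)]

/-- Normalised representative vectors. -/
def Nrm (x y : L) : Prop := (v x ≤ 1 ∧ y = 1) ∨ (x = 1 ∧ v y < 1)

variable {v} in
lemma Nrm.ne {x y : L} (h : Nrm v x y) : x ≠ 0 ∨ y ≠ 0 := by
  rcases h with ⟨_, rfl⟩ | ⟨rfl, _⟩ <;> simp

variable {v} in
lemma Nrm.le {x y : L} (h : Nrm v x y) : v x ≤ 1 ∧ v y ≤ 1 := by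
  rcases h with ⟨h, rfl⟩ | ⟨rfl, h⟩
  · simp [h]
  · simp [h.le]

lemma exists_nrm (p : Option L) : ∃ x y : L, Nrm v x y ∧ p = mkp x y := by
  cases p with
  | none => exact ⟨1, 0, Or.inr ⟨rfl, by simp⟩, by simp [mkp]⟩
  | some x =>
    by_cases hx : v x ≤ 1
    · exact ⟨x, 1, Or.inl ⟨hx, rfl⟩, by simp [mkp]⟩
    · push Not at hx
      have hx0 : x ≠ 0 := by rintro rfl; simp at hx; linarith
      refine ⟨1, x⁻¹, Or.inr ⟨rfl, ?_⟩, by simp [mkp, hx0]⟩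
      rw [map_inv₀]
      exact inv_lt_one_of_one_lt₀ hx

lemma sep [IsAlgClosed L] (F G : Polynomial (vints v hna)) (h1 : GoodRep v hna F G)
    (h2 : GoodRed v hna F G)
    (d : ℕ) (hd : max F.natDegree G.natDegree = d) (hd1 : 1 ≤ d)
    (hA : Attr v d (liftp v hna F) (liftp v hna G)) (x y x' y' : L) (hn : Nrm v x y)
    (hn' : Nrm v x' y')
    (hf : rmap (liftp v hna F) (liftp v hna G) (mkp x y) = mkp x y)
    (hf' : rmap (liftp v hna F) (liftp v hna G) (mkp x' y') = mkp x' y')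
    (hne : mkp x y ≠ mkp x' y') : v (x * y' - x' * y) = 1 := by
  have evl : ∀ (p : Polynomial (vints v hna)) (t : vints v hna),
      (liftp v hna p).eval (t : L) = (p.eval t : vints v hna) := by
    intro p t
    exact eval_map_apply (f := (vints v hna).subtype) (p := p) (x := t)
  have fin : ∀ F G : Polynomial (vints v hna), GoodRep v hna F G → GoodRed v hna F G →
      max F.natDegree G.natDegree = d → Attr v d (liftp v hna F) (liftp v hna G) →
      ∀ x z : L, v x ≤ 1 → v z ≤ 1 →
      rmap (liftp v hna F) (liftp v hna G) (some x) = some x →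
      rmap (liftp v hna F) (liftp v hna G) (some z) = some z → x ≠ z → v (x - z) = 1 := by
    intro F G h1 h2 hd hA x z hx hz hfx hfz hne
    rw [fix_some_iff _ _ h1.1] at hfx hfz
    refine sep_fin v hna F G d (hd ▸ le_max_left _ _) (hd ▸ le_max_right _ _) h2.1 hA ⟨x, hx⟩
      ⟨z, hz⟩ ?_ ?_ ?_
    · apply Subtype.ext
      have a1 := evl F ⟨x, hx⟩
      have a2 := evl G ⟨x, hx⟩
      push_cast
      rw [← a1, ← a2]; exact hfx
    · apply Subtype.ext
      have a1 := evl F ⟨z, hz⟩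
      have a2 := evl G ⟨z, hz⟩
      push_cast
      rw [← a1, ← a2]; exact hfz
    · intro h
      exact hne (congrArg Subtype.val h)
  have ms : ∀ x : L, mkp x 1 = some x := by intro x; simp [mkp]
  have vs : ∀ s : L, v s < 1 → v (s - 1) = 1 := by
    intro s hs
    rw [v.map_sub]
    exact v_one_sub v hna s hs
  rcases hn with ⟨hx, rfl⟩ | ⟨rfl, hy⟩ <;> rcases hn' with ⟨hx', rfl⟩ | ⟨rfl, hy'⟩
  · rw [ms] at hf hf' hne
    rw [ms] at hne
    rw [mul_one, mul_one]
    exact fin F G h1 h2 hd hA x x' hx hx' hf hf' (fun h => hne (by rw [h]))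
  · rw [one_mul]
    apply vs
    rw [map_mul]
    nlinarith [v.nonneg x, v.nonneg y']
  · rw [one_mul]
    apply v_one_sub v hna
    rw [map_mul]
    nlinarith [v.nonneg x', v.nonneg y]
  · obtain ⟨g1, g2⟩ := good_conj v hna F G h1 h2 d hd 0 1 1 0 (by simp)
    have hdet : (0 : L) * 0 - 1 * 1 ≠ 0 := by simp
    have hdL : max (liftp v hna F).natDegree (liftp v hna G).natDegree = d := by
      rw [liftp_natDegree, liftp_natDegree, hd]
    have eF : cF d (liftp v hna F) (liftp v hna G) (0 : L) 1 1 0 =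
        liftp v hna (cF d F G 0 1 1 0) := by
      have := (cF_map (vints v hna).subtype d F G 0 1 1 0).symm
      simpa [liftp] using this
    have eG : cG d (liftp v hna F) (liftp v hna G) (0 : L) 1 1 0 =
        liftp v hna (cG d F G 0 1 1 0) := by
      have := (cG_map (vints v hna).subtype d F G 0 1 1 0).symm
      simpa [liftp] using this
    have hA' := attr_conj v d _ _ hA 0 1 1 0 hdet
    have hK := conj_coprime d (liftp v hna F) (liftp v hna G) h1.1 hdL 0 1 1 0 hdet
    have hr := conj_rmap _ _ h1.1 d hdL hd1 0 1 1 0 hdet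
    rw [eF, eG] at hA' hr hK
    rw [liftp_natDegree, liftp_natDegree] at hK
    have mm : ∀ y : L, mob (0 : L) 1 1 0 (mkp 1 y) = some y := by
      intro y
      rw [mob_mkp _ _ _ _ hdet _ _ (by simp)]
      simp [mkp]
    have ff : ∀ y : L, rmap (liftp v hna F) (liftp v hna G) (mkp 1 y) = mkp 1 y →
        rmap (liftp v hna (cF d F G 0 1 1 0)) (liftp v hna (cG d F G 0 1 1 0)) (some y) =
          some y := by
      intro y hy
      have := congrFun hr (mkp 1 y)
      simp only [Function.comp_apply, hy, mm] at this
      exact this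
    have := fin _ _ g1 g2 hK.2 hA' y y' hy.le hy'.le (ff y hf) (ff y' hf')
      (fun h => hne (by rw [h]))
    rw [one_mul, one_mul, v.map_sub]
    exact this
end reduction

set_option maxHeartbeats 1000000 in
/-- Theorem, Case 2: let `φ = f/g` have degree `d ≥ 2` and suppose every
fixed point of `φ` in `P¹(K)` is attracting.  Then `φ` has exactly `d + 1` distinct fixed
points; and for any three distinct fixed points `x₁, x₂, x₃` and the Möbius transformation `h`
with `h(x₁) = 0`, `h(x₂) = 1`, `h(x₃) = ∞`, the map `φ` has potentially good reduction if and
only if `ψ = h ∘ φ ∘ h⁻¹` has good reduction. -/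
theorem pot_good_reduction_iff_attracting_case {K : Type*} [Field K] [IsAlgClosed K]
    (v : AbsoluteValue K ℝ) (hna : IsNonarchimedean (⇑v))
    (f g : Polynomial K) (hcop : IsCoprime f g)
    (hdeg : 2 ≤ max f.natDegree g.natDegree)
    (hattr : ∀ p : Option K, rmap f g p = p → v (multiplier f g p) < 1) :
    {p : Option K | rmap f g p = p}.ncard = max f.natDegree g.natDegree + 1 ∧
      ∀ x₁ x₂ x₃ : Option K, rmap f g x₁ = x₁ → rmap f g x₂ = x₂ → rmap f g x₃ = x₃ →
        x₁ ≠ x₂ → x₁ ≠ x₃ → x₂ ≠ x₃ →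
        ∀ a b c d : K, a * d - b * c ≠ 0 →
          mob a b c d x₁ = some 0 → mob a b c d x₂ = some 1 → mob a b c d x₃ = none →
          (PotGoodRed v hna f g ↔
            ∃ F G : Polynomial (vints v hna), GoodRep v hna F G ∧ GoodRed v hna F G ∧
              rmap (liftp v hna F) (liftp v hna G) ∘ mob a b c d = mob a b c d ∘ rmap f g) := by
  have hA := attr_of_multiplier v hna _ f g hcop rfl (le_trans one_le_two hdeg) hattr
  refine ⟨count_fixed v _ f g hcop rfl (le_trans one_le_two hdeg) hA, ?_⟩
  intro x₁ x₂ x₃ hx₁ hx₂ hx₃ h12 h13 h23 a b c d hdet h1 h2 h3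
  refine ⟨?_, fun ⟨F, G, hFG⟩ => ⟨a, b, c, d, hdet, F, G, hFG⟩⟩
  rintro ⟨a', b', c', d', hdet', F, G, hrep, hred, hcomp⟩
  obtain ⟨D, hD⟩ : ∃ D, max f.natDegree g.natDegree = D := ⟨_, rfl⟩
  rw [hD] at hA hdeg
  have hD1 : 1 ≤ D := le_trans one_le_two hdeg
  have hconj := conj_rmap f g hcop D hD hD1 a' b' c' d' hdet'
  obtain ⟨hcc, hcd⟩ := conj_coprime D f g hcop hD a' b' c' d' hdet'
  have hreq : rmap (cF D f g a' b' c' d') (cG D f g a' b' c' d') =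
      rmap (liftp v hna F) (liftp v hna G) :=
    (mob_surj a' b' c' d' hdet').injective_comp_right (hconj.trans hcomp.symm)
  obtain ⟨t, ht, hF, hG⟩ := rmap_unique _ _ _ _ hcc hrep.1 hreq
  have hA' : Attr v D (liftp v hna F) (liftp v hna G) := by
    rw [hF, hG]
    exact attr_smul v D _ _ (attr_conj v D f g hA a' b' c' d' hdet') t ht
  have hLD : max (liftp v hna F).natDegree (liftp v hna G).natDegree = D := by
    rw [hF, hG, natDegree_C_mul ht, natDegree_C_mul ht, hcd]
  have hFD : max F.natDegree G.natDegree = D := by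
    rwa [liftp_natDegree, liftp_natDegree] at hLD
  have hfix : ∀ x, rmap f g x = x → rmap (liftp v hna F) (liftp v hna G) (mob a' b' c' d' x) =
      mob a' b' c' d' x := by
    intro x hx
    have := congrFun hcomp x
    simpa only [Function.comp_apply, hx] using this
  have hinj := mob_inj_s16 a' b' c' d' hdet'
  obtain ⟨p1, q1, n1, e1⟩ := exists_nrm v (mob a' b' c' d' x₁)
  obtain ⟨p2, q2, n2, e2⟩ := exists_nrm v (mob a' b' c' d' x₂)
  obtain ⟨p3, q3, n3, e3⟩ := exists_nrm v (mob a' b' c' d' x₃)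
  have f1 := hfix _ hx₁
  have f2 := hfix _ hx₂
  have f3 := hfix _ hx₃
  have i12 := hinj.ne h12
  have i13 := hinj.ne h13
  have i23 := hinj.ne h23
  rw [e1] at f1 i12 i13
  rw [e2] at f2 i12 i23
  rw [e3] at f3 i13 i23
  have v12 := sep v hna F G hrep hred D hFD hD1 hA' _ _ _ _ n1 n2 f1 f2 i12
  have v13 := sep v hna F G hrep hred D hFD hD1 hA' _ _ _ _ n1 n3 f1 f3 i13
  have v23 := sep v hna F G hrep hred D hFD hD1 hA' _ _ _ _ n2 n3 f2 f3 i23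
  obtain ⟨P1, hP1⟩ : ∃ P : vints v hna, (P : K) = p1 := ⟨⟨p1, n1.le.1⟩, rfl⟩
  obtain ⟨Q1, hQ1⟩ : ∃ P : vints v hna, (P : K) = q1 := ⟨⟨q1, n1.le.2⟩, rfl⟩
  obtain ⟨P3, hP3⟩ : ∃ P : vints v hna, (P : K) = p3 := ⟨⟨p3, n3.le.1⟩, rfl⟩
  obtain ⟨Q3, hQ3⟩ : ∃ P : vints v hna, (P : K) = q3 := ⟨⟨q3, n3.le.2⟩, rfl⟩
  obtain ⟨α, hα⟩ : ∃ P : vints v hna, (P : K) = p2 * q3 - p3 * q2 := ⟨⟨_, v23.le⟩, rfl⟩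
  have v12' : v (-(p1 * q2 - p2 * q1)) = 1 := by rw [map_neg_eq_map]; exact v12
  obtain ⟨β, hβ⟩ : ∃ P : vints v hna, (P : K) = -(p1 * q2 - p2 * q1) := ⟨⟨_, v12'.le⟩, rfl⟩
  have hαv : v (α : K) = 1 := by rw [hα]; exact v23
  have hβv : v (β : K) = 1 := by rw [hβ]; exact v12'
  have hdU : v (((α * Q1) * (-(β * P3)) - (-(α * P1)) * (β * Q3) : vints v hna) : K) = 1 := by
    have : (((α * Q1) * (-(β * P3)) - (-(α * P1)) * (β * Q3) : vints v hna) : K) =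
        α * β * (p1 * q3 - p3 * q1) := by
      push_cast
      rw [hP1, hQ1, hP3, hQ3]
      ring
    rw [this, map_mul, map_mul, hαv, hβv, v13]; norm_num
  obtain ⟨g1, g2⟩ := good_conj v hna F G hrep hred D hFD (α * Q1) (-(α * P1)) (β * Q3) (-(β * P3))
    hdU
  refine ⟨_, _, g1, g2, ?_⟩
  have hdUK : ((α : K) * q1) * (-((β : K) * p3)) - (-((α : K) * p1)) * ((β : K) * q3) ≠ 0 := by
    intro h
    have h' : (((α * Q1) * (-(β * P3)) - (-(α * P1)) * (β * Q3) : vints v hna) : K) = 0 := by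
      push_cast
      rw [hP1, hQ1, hP3, hQ3]; exact h
    rw [h', map_zero] at hdU
    exact zero_ne_one hdU
  have hU := conj_rmap _ _ hrep.1 D hLD hD1 ((α : K) * q1) (-((α : K) * p1))
    ((β : K) * q3) (-((β : K) * p3)) hdUK
  have eF : cF D (liftp v hna F) (liftp v hna G) ((α : K) * q1) (-((α : K) * p1))
    ((β : K) * q3) (-((β : K) * p3)) =
      liftp v hna (cF D F G (α * Q1) (-(α * P1)) (β * Q3) (-(β * P3))) := by
    rw [← hP1, ← hQ1, ← hP3, ← hQ3]
    exact (cF_map (vints v hna).subtype D F G (α * Q1) (-(α * P1)) (β * Q3) (-(β * P3))).symm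
  have eG : cG D (liftp v hna F) (liftp v hna G) ((α : K) * q1) (-((α : K) * p1))
    ((β : K) * q3) (-((β : K) * p3)) =
      liftp v hna (cG D F G (α * Q1) (-(α * P1)) (β * Q3) (-(β * P3))) := by
    rw [← hP1, ← hQ1, ← hP3, ← hQ3]
    exact (cG_map (vints v hna).subtype D F G (α * Q1) (-(α * P1)) (β * Q3) (-(β * P3))).symm
  rw [eF, eG] at hU
  have hα0 : (α : K) ≠ 0 := by intro h; rw [h] at hαv; simp at hαv
  have hβ0 : (β : K) ≠ 0 := by intro h; rw [h] at hβv; simp at hβv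
  have h130 : p1 * q3 - p3 * q1 ≠ 0 := by intro h; rw [h] at v13; simp at v13
  have hcmp := mob_comp_s16 _ _ _ _ _ _ _ _ hdUK hdet'
  have hh : mob a b c d = fun p => mob ((α : K) * q1) (-((α : K) * p1))
      ((β : K) * q3) (-((β : K) * p3)) (mob a' b' c' d' p) := by
    have m1 : mob ((α : K) * q1) (-((α : K) * p1))
      ((β : K) * q3) (-((β : K) * p3)) (mob a' b' c' d' x₁) = some 0 := by
      rw [e1, mob_mkp _ _ _ _ hdUK _ _ n1.ne]
      have z1 : (α : K) * q1 * p1 + -((α : K) * p1) * q1 = 0 := by ring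
      have z2 : (β : K) * q3 * p1 + -((β : K) * p3) * q1 ≠ 0 := by
        have : (β : K) * q3 * p1 + -((β : K) * p3) * q1 = β * (p1 * q3 - p3 * q1) := by ring
        rw [this]; exact mul_ne_zero hβ0 h130
      rw [z1, mkp, if_neg z2, zero_div]
    have m2 : mob ((α : K) * q1) (-((α : K) * p1))
      ((β : K) * q3) (-((β : K) * p3)) (mob a' b' c' d' x₂) = some 1 := by
      rw [e2, mob_mkp _ _ _ _ hdUK _ _ n2.ne]
      have z1 : (α : K) * q1 * p2 + -((α : K) * p1) * q2 = α * β := by rw [hβ]; ring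
      have z2 : (β : K) * q3 * p2 + -((β : K) * p3) * q2 = α * β := by rw [hα]; ring
      rw [z1, z2, mkp, if_neg (mul_ne_zero hα0 hβ0), div_self (mul_ne_zero hα0 hβ0)]
    have m3 : mob ((α : K) * q1) (-((α : K) * p1))
      ((β : K) * q3) (-((β : K) * p3)) (mob a' b' c' d' x₃) = none := by
      rw [e3, mob_mkp _ _ _ _ hdUK _ _ n3.ne]
      have z2 : (β : K) * q3 * p3 + -((β : K) * p3) * q3 = 0 := by ring
      rw [z2, mkp, if_pos rfl]
    rw [hcmp] at m1 m2 m3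
    rw [mob_uniq x₁ x₂ x₃ _ _ _ _ _ _ _ _ hdet ?_ h1 h2 h3 m1 m2 m3]
    · funext p
      rw [hcmp]
    · have := mul_ne_zero hdUK hdet'
      convert this using 1
      ring
  funext p
  simp only [Function.comp_apply, hh]
  have c1 := congrFun hU (mob a' b' c' d' p)
  have c2 := congrFun hcomp p
  simp only [Function.comp_apply] at c1 c2
  rw [c1, c2]

end PaperPGR
end
end
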